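/- Under the standing assumptions, for every x ∈ X there exists r_x > 0 such that q(x,y) ≤ C_S · μ(B_{xy})^{1/2} for all y ∈ B_d(x,r_x), where C_S = 16 C_W C_D^{28+16⌈log₂ λ⌉}. -/

import Mathlib

open Metric MeasureTheory Set Filter Topology UniformSpace ENNReal
open scoped NNReal

noncomputable section

/-- The set `B_{xy} = B(x, d(x,y)) ∪ B(y, d(x,y))`. -/
def pairBall {X : Type*} [MetricSpace X] (x y : X) : Set X :=
  Metric.ball x (dist x y) ∪ Metric.ball y (dist x y)

/-- A `δ`-chain from `x` to `y`: a finite sequence `z 0 = x, …, z m = y` with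
consecutive distances at most `δ`. -/
def IsDeltaChain {X : Type*} [MetricSpace X] (δ : ℝ) (x y : X) (z : ℕ → X) (m : ℕ) : Prop :=
  z 0 = x ∧ z m = y ∧ ∀ j < m, dist (z j) (z (j + 1)) ≤ δ

/-- `q^δ_{μ,s}(x,y)`: infimum of `∑ μ(B_{x_j x_{j-1}})^{1/s}` over `δ`-chains from `x` to `y`. -/
def qDelta {X : Type*} [MetricSpace X] [MeasurableSpace X]
    (μ : Measure X) (s δ : ℝ) (x y : X) : ℝ≥0∞ :=
  ⨅ (m : ℕ) (z : ℕ → X) (_ : IsDeltaChain δ x y z m),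
    ∑ j ∈ Finset.range m, μ (pairBall (z j) (z (j + 1))) ^ (1 / s)

/-- `q_{μ,s}(x,y) = limsup_{δ → 0⁺} q^δ_{μ,s}(x,y)`. -/
def qmu {X : Type*} [MetricSpace X] [MeasurableSpace X]
    (μ : Measure X) (s : ℝ) (x y : X) : ℝ≥0∞ :=
  Filter.limsup (fun δ => qDelta μ s δ x y) (nhdsWithin (0 : ℝ) (Set.Ioi 0))

/-- `μ` is a doubling measure with constant `CD`: balls have positive finite measure and
`μ(B(x,2r)) ≤ CD · μ(B(x,r))`. -/
def IsDoublingWith {X : Type*} [MetricSpace X] [MeasurableSpace X]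
    (μ : Measure X) (CD : ℝ≥0) : Prop :=
  (∀ (x : X) (r : ℝ), 0 < r → 0 < μ (Metric.ball x r) ∧ μ (Metric.ball x r) < ⊤) ∧
    ∀ (x : X) (r : ℝ), 0 < r → μ (Metric.ball x (2 * r)) ≤ CD * μ (Metric.ball x r)

/-- `μ` is a `CW`-weak metric doubling measure of dimension `s`:
`μ(B_{xy})^{1/s} ≤ CW · q_{μ,s}(x,y)` for all `x, y`. -/
def IsWMDM {X : Type*} [MetricSpace X] [MeasurableSpace X]
    (μ : Measure X) (s : ℝ) (CW : ℝ≥0) : Prop :=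
  ∀ x y : X, μ (pairBall x y) ^ (1 / s) ≤ CW * qmu μ s x y

/-- A continuum is a compact connected set. -/
def IsContinuum {X : Type*} [TopologicalSpace X] (K : Set X) : Prop :=
  IsCompact K ∧ IsConnected K

/-- `X` is `λ`-linearly locally connected. -/
def IsLLC (X : Type*) [MetricSpace X] (lam : ℝ) : Prop :=
  ∀ (x : X) (r : ℝ), 0 < r →
    (∀ y ∈ Metric.ball x r, ∀ z ∈ Metric.ball x r,
      ∃ K : Set X, IsContinuum K ∧ K ⊆ Metric.ball x (lam * r) ∧ y ∈ K ∧ z ∈ K) ∧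
    (∀ y z : X, y ∉ Metric.ball x r → z ∉ Metric.ball x r →
      ∃ K : Set X, IsContinuum K ∧ K ⊆ (Metric.ball x (r / lam))ᶜ ∧ y ∈ K ∧ z ∈ K)

/-- The sphere `S²`, with the metric inherited from `ℝ³`. -/
abbrev Sphere2 : Set (EuclideanSpace ℝ (Fin 3)) := Metric.sphere 0 1

/-- A circle domain in `S²`: an open connected set each of whose complementary
connected components is a point or a round closed disk (a closed metric ball). -/
def IsCircleDomainS2 (Ω : Set ↥Sphere2) : Prop :=
  IsOpen Ω ∧ IsConnected Ω ∧ ∀ p ∈ Ωᶜ,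
    connectedComponentIn Ωᶜ p = {p} ∨
      ∃ (c : ↥Sphere2) (ρ : ℝ), 0 < ρ ∧ connectedComponentIn Ωᶜ p = Metric.closedBall c ρ

/-- A circle domain in the plane. -/
def IsCircleDomainC (Ω : Set ℂ) : Prop :=
  IsOpen Ω ∧ IsConnected Ω ∧ ∀ p ∈ Ωᶜ,
    connectedComponentIn Ωᶜ p = {p} ∨
      ∃ (c : ℂ) (ρ : ℝ), 0 < ρ ∧ connectedComponentIn Ωᶜ p = Metric.closedBall c ρ

/-- The residual set `X̄ ∖ X` inside the completion of `X`. -/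
def resid (X : Type*) [MetricSpace X] : Set (Completion X) :=
  (Set.range ((↑) : X → Completion X))ᶜ

/-- The collection of connected components of `X̄ ∖ X`. -/
def residComps (X : Type*) [MetricSpace X] : Set (Set (Completion X)) :=
  {C | ∃ p ∈ resid X, C = connectedComponentIn (resid X) p}

/-- Distance between two sets. -/
def setSetDist {Z : Type*} [MetricSpace Z] (A B : Set Z) : ℝ :=
  sInf (Set.image2 dist A B)

/-- `f` is `η`-quasisymmetric, for a homeomorphism `η` of `[0,∞)`. -/
def IsQSWith {X Y : Type*} [MetricSpace X] [MetricSpace Y]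
    (η : ℝ≥0 ≃ₜ ℝ≥0) (f : X → Y) : Prop :=
  ∀ x y z : X, x ≠ z →
    nndist (f x) (f y) ≤ η (nndist x y / nndist x z) * nndist (f x) (f z)

/-- `ℓ = ⌈log₂ λ⌉`. -/
def ellOf (lam : ℝ) : ℕ := (Int.ceil (Real.logb 2 lam)).toNat

/-- The constant `C_S = 16 C_W C_D^{28+16⌈log₂ λ⌉}`. -/
def CSconst (lam : ℝ) (CD CW : ℝ≥0) : ℝ≥0∞ :=
  16 * (CW : ℝ≥0∞) * (CD : ℝ≥0∞) ^ (28 + 16 * ellOf lam)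

/-- `K` separates `A` and `B`: `A` and `B` lie in different components of the complement of `K`. -/
def SeparatesSets {X : Type*} [TopologicalSpace X] (K A B : Set X) : Prop :=
  A ⊆ Kᶜ ∧ B ⊆ Kᶜ ∧
    ∀ p ∈ A, ∀ p' ∈ B, connectedComponentIn Kᶜ p ≠ connectedComponentIn Kᶜ p'

/-- A topological disk: a set homeomorphic to an open disk in the plane. -/
def IsTopDisk {X : Type*} [TopologicalSpace X] (U : Set X) : Prop :=
  Nonempty (↥U ≃ₜ ↥(Metric.ball (0 : ℂ) 1))

/-- Lower line integral `∫_γ ρ ds` over `γ : [a,b] → Y`, as a supremum of lower sums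
over partitions of `[a,b]`. -/
def lowerLineIntegral {Y : Type*} [PseudoEMetricSpace Y]
    (ρ : Y → ℝ≥0∞) (γ : ℝ → Y) (a b : ℝ) : ℝ≥0∞ :=
  ⨆ (n : ℕ) (t : ℕ → ℝ) (_ : t 0 = a) (_ : t n = b) (_ : ∀ j < n, t j ≤ t (j + 1)),
    ∑ j ∈ Finset.range n,
      (⨅ u ∈ Set.Icc (t j) (t (j + 1)), ρ (γ u)) * edist (γ (t j)) (γ (t (j + 1)))

/-- `γ` (with parameter interval `[0,1]`) is locally rectifiable on the open interval `(0,1)`. -/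
def LocRectifiableOn {Y : Type*} [PseudoEMetricSpace Y] (γ : ℝ → Y) : Prop :=
  ∀ c d : ℝ, 0 < c → c ≤ d → d < 1 → eVariationOn γ (Set.Icc c d) < ⊤

/-- The line integral of `ρ` over the open part of `γ`. -/
def openLineIntegral {Y : Type*} [PseudoEMetricSpace Y] (ρ : Y → ℝ≥0∞) (γ : ℝ → Y) : ℝ≥0∞ :=
  ⨆ (c : ℝ) (d : ℝ) (_ : 0 < c) (_ : c ≤ d) (_ : d < 1), lowerLineIntegral ρ γ c d

/-- `ρ` is admissible for the path family `Γ`. -/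
def IsAdmissible {Y : Type*} [PseudoEMetricSpace Y] (Γ : Set (ℝ → Y)) (ρ : Y → ℝ≥0∞) : Prop :=
  ∀ γ ∈ Γ, LocRectifiableOn γ → 1 ≤ openLineIntegral ρ γ

def borelSpaceBorel (Y : Type*) [TopologicalSpace Y] : @BorelSpace Y _ (borel Y) :=
  @BorelSpace.mk Y _ (borel Y) rfl

/-- The Hausdorff 2-measure of a metric space, normalized to coincide with Lebesgue measure
in the Euclidean plane. -/
def hausdorff2 (Y : Type*) [EMetricSpace Y] : @Measure Y (borel Y) :=
  ENNReal.ofReal (Real.pi / 4) •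
    @Measure.hausdorffMeasure Y _ (borel Y) (borelSpaceBorel Y) 2

/-- The conformal modulus of a path family in a metric space, with respect to the
(normalized) Hausdorff 2-measure. -/
def modulusH2 {Y : Type*} [EMetricSpace Y] (Γ : Set (ℝ → Y)) : ℝ≥0∞ :=
  ⨅ (ρ : Y → ℝ≥0∞) (_ : @Measurable Y ℝ≥0∞ (borel Y) _ ρ) (_ : IsAdmissible Γ ρ),
    @MeasureTheory.lintegral Y (borel Y) (hausdorff2 Y) fun y => ρ y ^ 2

/-- The conformal modulus of a path family in the plane, with respect to Lebesgue area measure. -/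
def modulusC (Γ : Set (ℝ → ℂ)) : ℝ≥0∞ :=
  ⨅ (ρ : ℂ → ℝ≥0∞) (_ : Measurable ρ) (_ : IsAdmissible Γ ρ), ∫⁻ z, ρ z ^ 2

/-- A homeomorphism between metric spaces is `K`-quasiconformal if it distorts moduli of
path families by a factor of at most `K` in both directions. -/
def IsQCWith {Y Z : Type*} [EMetricSpace Y] [EMetricSpace Z] (K : ℝ≥0∞) (f : Y ≃ₜ Z) : Prop :=
  ∀ Γ : Set (ℝ → Y),
    modulusH2 ((fun γ => (f : Y → Z) ∘ γ) '' Γ) ≤ K * modulusH2 Γ ∧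
      modulusH2 Γ ≤ K * modulusH2 ((fun γ => (f : Y → Z) ∘ γ) '' Γ)

/-- The family `Γ(A,B;G)` of paths joining `A` and `B` in `G` (parameter interval `[0,1]`). -/
def joinPaths (A B G : Set ℂ) : Set (ℝ → ℂ) :=
  {γ | ContinuousOn γ (Set.Icc 0 1) ∧ γ 0 ∈ A ∧ γ 1 ∈ B ∧
    γ 0 ∈ closure G ∧ γ 1 ∈ closure G ∧ ∀ u ∈ Set.Ioo (0 : ℝ) 1, γ u ∈ G}

/-- The constant `α = 2^{−2−2M−π²C_W²C_D^{1+log₂ C_X}/(8 log 2)}`. -/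
def alphaConst (M : ℕ) (CD CW : ℝ≥0) (CX : ℝ) : ℝ :=
  (2 : ℝ) ^ (-2 - 2 * (M : ℝ) -
    Real.pi ^ 2 * (CW : ℝ) ^ 2 * (CD : ℝ) ^ ((1 : ℝ) + Real.logb 2 CX) / (8 * Real.log 2))

/-!
Write `w(z, r) = μ(B(z, r))^{1/2}`. The weak metric doubling property bounds `q(a, p)` from below by
a multiple of `w` at scale `d(a, p)`; the point is to produce cheap chains.

Level sets of the `q^δ`-distance from a small ball separate that ball from the outside. Averaging
the cost of these level sets against the measure of an annulus (a length-area argument) yields, at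
every scale `s` around `c`, a level set whose total cost is at most a multiple of `w(c, s)`. By
planarity one component of a neighbourhood of it still separates `c` from a far away point; the
separation theorem behind this step is derived from Eilenberg's criterion, which expresses
separation in the plane through continuous logarithms. So there is a connected loop around `c` at
scale `s` of cost `≲ w(c, s)`.

The same averaging gives a cheap radial chain crossing the annuli around `c`: if all such chains
were expensive, there would be a separating loop so cheap that the lower bound for `q`, applied to
two far apart points of it, fails. A radial chain meets the loops at consecutive dyadic scales, so
these loops can be joined at cost `≲ w(c, s)`. Summing over all scales below `d(x, y)` around `x`
and around `y`, where `∑ w(z, 2⁻ᵏ s) ≲ w(z, s)` by reverse doubling, and joining the two largest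
loops, connects `x` to `y` by chains of cost `≲ μ(B_{xy})^{1/2}`.
-/

/-! ### Continuous logarithms and planar separation -/

section ContinuousLog

variable {Y : Type*} [TopologicalSpace Y] {f g : Y → ℂ} {K K₁ K₂ : Set Y}

/-- The function `f` has a continuous logarithm on `K`. This is Eilenberg's substitute for winding
numbers: a compact planar set `K` separates `a` from `∞` iff `z ↦ z - a` has no continuous
logarithm on `K`. Only the values of the logarithm on `K` matter. -/
def HasContinuousLogOn (f : Y → ℂ) (K : Set Y) : Prop :=
  ∃ g : Y → ℂ, ContinuousOn g K ∧ ∀ z ∈ K, Complex.exp (g z) = f z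

theorem hasContinuousLogOn_const {c : ℂ} (hc : c ≠ 0) (K : Set Y) :
    HasContinuousLogOn (fun _ => c) K :=
  ⟨fun _ => Complex.log c, continuousOn_const, fun _ _ => Complex.exp_log hc⟩

theorem HasContinuousLogOn.of_norm_sub_lt (hf : HasContinuousLogOn f K) (hg : ContinuousOn g K)
    (hfg : ∀ z ∈ K, ‖g z - f z‖ < ‖f z‖) : HasContinuousLogOn g K := by
  obtain ⟨l, hl, hexp⟩ := hf
  have hslit : ∀ z ∈ K, g z / Complex.exp (l z) ∈ Complex.slitPlane := by
    intro z hz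
    have hlt : ‖(g z - f z) / f z‖ < 1 := by
      rw [norm_div, div_lt_one ((norm_nonneg _).trans_lt (hfg z hz))]
      exact hfg z hz
    convert! Complex.mem_slitPlane_of_norm_lt_one hlt using 1
    rw [← hexp z hz]
    field_simp
    ring
  refine ⟨fun z => l z + Complex.log (g z / Complex.exp (l z)),
    hl.add ((hg.div hl.cexp fun z _ => Complex.exp_ne_zero _).clog hslit), fun z hz => ?_⟩
  rw [Complex.exp_add, Complex.exp_log (Complex.slitPlane_ne_zero (hslit z hz)),
    mul_div_cancel₀ _ (Complex.exp_ne_zero _)]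

theorem HasContinuousLogOn.union (h₁ : HasContinuousLogOn f K₁) (h₂ : HasContinuousLogOn f K₂)
    (hK₁ : IsClosed K₁) (hK₂ : IsClosed K₂) (hd : Disjoint K₁ K₂) :
    HasContinuousLogOn f (K₁ ∪ K₂) := by
  classical
  obtain ⟨g₁, hg₁, he₁⟩ := h₁
  obtain ⟨g₂, hg₂, he₂⟩ := h₂
  have eq₁ : EqOn (K₁.piecewise g₁ g₂) g₁ K₁ := piecewise_eqOn _ _ _
  have eq₂ : EqOn (K₁.piecewise g₁ g₂) g₂ K₂ :=
    (piecewise_eqOn_compl _ _ _).mono hd.subset_compl_left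
  refine ⟨K₁.piecewise g₁ g₂, (hg₁.congr eq₁).union_of_isClosed (hg₂.congr eq₂) hK₁ hK₂, ?_⟩
  rintro z (hz | hz)
  · rw [eq₁ hz, he₁ z hz]
  · rw [eq₂ hz, he₂ z hz]

theorem hasContinuousLogOn_sUnion {𝒦 : Set (Set Y)} (hfin : 𝒦.Finite)
    (hcl : ∀ K ∈ 𝒦, IsClosed K) (hdis : 𝒦.PairwiseDisjoint id)
    (hlog : ∀ K ∈ 𝒦, HasContinuousLogOn f K) : HasContinuousLogOn f (⋃₀ 𝒦) := by
  induction 𝒦, hfin using Set.Finite.induction_on with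
  | empty => exact ⟨0, by simp, by simp⟩
  | @insert K 𝒦 hK hfin ih =>
    rw [forall_mem_insert] at hcl hlog
    rw [sUnion_insert]
    refine hlog.1.union (ih hcl.2 (hdis.subset (subset_insert _ _)) hlog.2) hcl.1 ?_ ?_
    · rw [sUnion_eq_biUnion]
      exact hfin.isClosed_biUnion hcl.2
    · refine disjoint_sUnion_right.2 fun L hL => ?_
      exact hdis (mem_insert _ _) (mem_insert_of_mem _ hL) fun h => hK (h ▸ hL)

theorem hasContinuousLogOn_univ [SimplyConnectedSpace Y] [LocallyPathConnectedSpace Y]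
    (hf : Continuous f) (hf₀ : ∀ z, f z ≠ 0) : HasContinuousLogOn f univ := by
  obtain ⟨z₀⟩ : Nonempty Y := inferInstance
  obtain ⟨F, ⟨-, hF⟩, -⟩ := Complex.isCoveringMapOn_exp.existsUnique_continuousMap_lifts
    (⟨f, hf⟩ : C(Y, ℂ)) (a₀ := z₀) (e₀ := Complex.log (f z₀)) (Complex.exp_log (hf₀ z₀)) hf₀
  exact ⟨F, F.continuous.continuousOn, fun z _ => congrFun hF z⟩

end ContinuousLog

section Plane

variable {K V : Set ℂ} {a : ℂ}

theorem eventually_hasContinuousLogOn_sub_iff (hK : IsClosed K) (ha : a ∉ K) :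
    ∀ᶠ b in 𝓝 a,
      HasContinuousLogOn (fun z => z - a) K ↔ HasContinuousLogOn (fun z => z - b) K := by
  obtain ⟨e, he, hball⟩ := Metric.isOpen_iff.1 hK.isOpen_compl a ha
  have hfar : ∀ z ∈ K, e ≤ ‖z - a‖ := fun z hz => by
    rw [← dist_eq_norm]
    exact not_lt.1 fun h => hball h hz
  filter_upwards [Metric.ball_mem_nhds a (half_pos he)] with b hb
  rw [mem_ball, dist_eq_norm] at hb
  refine ⟨fun h => h.of_norm_sub_lt (by fun_prop) fun z hz => ?_,
    fun h => h.of_norm_sub_lt (by fun_prop) fun z hz => ?_⟩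
  · rw [_root_.sub_sub_sub_cancel_left, norm_sub_rev]
    linarith [hfar z hz]
  · rw [_root_.sub_sub_sub_cancel_left]
    linarith [hfar z hz, norm_sub_le_norm_sub_add_norm_sub z b a]

theorem hasContinuousLogOn_sub_of_not_isBounded (hK : IsCompact K) (ha : a ∉ K)
    (hunb : ¬ Bornology.IsBounded (connectedComponentIn Kᶜ a)) :
    HasContinuousLogOn (fun z => z - a) K := by
  obtain ⟨r, hr⟩ := hK.isBounded.subset_closedBall 0
  obtain ⟨b, hb, hrb⟩ : ∃ b ∈ connectedComponentIn Kᶜ a, max r 0 < ‖b‖ := by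
    by_contra! hle
    exact hunb (isBounded_closedBall.subset fun z hz => mem_closedBall_zero_iff.2 (hle z hz))
  have hlog : HasContinuousLogOn (fun z => z - b) K := by
    have hb₀ : -b ≠ 0 := neg_ne_zero.2 (norm_pos_iff.1 ((le_max_right _ _).trans_lt hrb))
    refine (hasContinuousLogOn_const hb₀ K).of_norm_sub_lt (by fun_prop) fun z hz => ?_
    simpa using (mem_closedBall_zero_iff.1 (hr hz)).trans_lt ((le_max_left _ _).trans_lt hrb)
  refine (isPreconnected_connectedComponentIn.induction₂'
    (fun c d => HasContinuousLogOn (fun z => z - c) K ↔ HasContinuousLogOn (fun z => z - d) K)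
    (fun c hc => ?_) (fun _ _ _ _ _ _ => Iff.trans) (mem_connectedComponentIn ha) hb).2 hlog
  filter_upwards [(eventually_hasContinuousLogOn_sub_iff hK.isClosed
    (connectedComponentIn_subset _ _ hc)).filter_mono nhdsWithin_le_nhds] with d hd
  exact ⟨hd, hd.symm⟩

theorem not_hasContinuousLogOn_sub_sphere (a : ℂ) {ρ : ℝ} (hρ : 0 < ρ) :
    ¬ HasContinuousLogOn (fun z => z - a) (sphere a ρ) := by
  rintro ⟨g, hg, hexp⟩
  have hval : ∀ t, Complex.exp (g (circleMap a ρ t)) = ρ * Complex.exp (t * Complex.I) :=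
    fun t => by rw [hexp _ (circleMap_mem_sphere a hρ.le t)]; simp [circleMap]
  have hgc : Continuous fun t => g (circleMap a ρ t) :=
    hg.comp_continuous (continuous_circleMap a ρ) (circleMap_mem_sphere a hρ.le)
  -- `g (a + ρ exp (i t)) - i t` is a continuous logarithm of `ρ`, so it does not depend on `t`.
  have huniq := Complex.isCoveringMapOn_exp.existsUnique_continuousMap_lifts
    (⟨fun _ => (ρ : ℂ), continuous_const⟩ : C(ℝ, ℂ)) (a₀ := 0) (e₀ := g (circleMap a ρ 0))
    (by simp [hval]) (fun _ => by simpa using hρ.ne')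
  have heq := huniq.unique
    (y₁ := ⟨fun t : ℝ => g (circleMap a ρ t) - t * Complex.I, hgc.sub (by fun_prop)⟩)
    (y₂ := ⟨fun _ => g (circleMap a ρ 0), continuous_const⟩)
    ⟨by simp, by
      funext t
      simp only [Function.comp, ContinuousMap.coe_mk, Complex.exp_sub, hval]
      field_simp⟩
    ⟨rfl, by funext t; simp [hval]⟩
  have hturn := congrArg (fun F : C(ℝ, ℂ) => F (2 * Real.pi)) heq
  have hper : circleMap a ρ (2 * Real.pi) = circleMap a ρ 0 := by
    simpa using periodic_circleMap a ρ 0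
  simp only [ContinuousMap.coe_mk, hper, sub_eq_self] at hturn
  simp [Complex.I_ne_zero, Real.pi_ne_zero] at hturn

theorem not_hasContinuousLogOn_sub_of_frontier_subset (hK : IsClosed K)
    (hVb : Bornology.IsBounded V) (ha : a ∈ V) (hfr : frontier V ⊆ K) :
    ¬ HasContinuousLogOn (fun z => z - a) K := by
  classical
  rintro ⟨g, hg, hexp⟩
  obtain ⟨G, hG⟩ := ContinuousMap.exists_restrict_eq hK
    (⟨K.domRestrict g, continuousOn_iff_continuous_domRestrict.1 hg⟩ : C(K, ℂ))
  have hGK : ∀ z ∈ K, G z = g z := fun z hz => congrArg (fun F : C(K, ℂ) => F ⟨z, hz⟩) hG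
  -- Gluing `exp G` inside `V` to `z - a` outside gives a nonvanishing function on the plane.
  let h : ℂ → ℂ := V.piecewise (fun z => Complex.exp (G z)) fun z => z - a
  have hcont : Continuous h := Continuous.piecewise
    (fun z hz => by rw [hGK z (hfr hz), hexp z (hfr hz)]) (by fun_prop) (by fun_prop)
  have hne : ∀ z, h z ≠ 0 := fun z => by
    by_cases hz : z ∈ V
    · simp only [h, piecewise_eq_of_mem _ _ _ hz]
      exact Complex.exp_ne_zero _
    · simp only [h, piecewise_eq_of_notMem _ _ _ hz]
      exact fun h₀ => hz (sub_eq_zero.1 h₀ ▸ ha)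
  obtain ⟨H, hH, hHexp⟩ := hasContinuousLogOn_univ hcont hne
  obtain ⟨r, hr, hVr⟩ := hVb.subset_ball_lt 0 a
  refine not_hasContinuousLogOn_sub_sphere a hr ⟨H, hH.mono (subset_univ _), fun z hz => ?_⟩
  have hzV : z ∉ V := fun hzV => (mem_ball.1 (hVr hzV)).ne (mem_sphere.1 hz)
  simp only [hHexp z (mem_univ z), h, piecewise_eq_of_notMem _ _ _ hzV]

theorem frontier_connectedComponentIn_compl_subset {Y : Type*} [TopologicalSpace Y]
    [LocallyConnectedSpace Y] {K : Set Y} (hK : IsClosed K) (a : Y) :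
    frontier (connectedComponentIn Kᶜ a) ⊆ K := by
  intro z hz
  by_contra hzK
  have hzz : z ∈ connectedComponentIn Kᶜ z := mem_connectedComponentIn hzK
  rw [hK.isOpen_compl.connectedComponentIn.frontier_eq] at hz
  obtain ⟨w, hwz, hwa⟩ :=
    mem_closure_iff.1 hz.1 _ hK.isOpen_compl.connectedComponentIn hzz
  exact hz.2 (connectedComponentIn_eq hwa ▸ connectedComponentIn_eq hwz ▸ hzz)

theorem exists_isBounded_frontier_subset_of_frontier_subset_sUnion {𝒦 : Set (Set ℂ)}
    (hfin : 𝒦.Finite) (hcpt : ∀ K ∈ 𝒦, IsCompact K) (hdis : 𝒦.PairwiseDisjoint id)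
    (hVb : Bornology.IsBounded V) (ha : a ∈ V) (haK : ∀ K ∈ 𝒦, a ∉ K)
    (hfr : frontier V ⊆ ⋃₀ 𝒦) :
    ∃ K ∈ 𝒦, ∃ W : Set ℂ, IsOpen W ∧ Bornology.IsBounded W ∧ a ∈ W ∧ frontier W ⊆ K := by
  by_contra! hno
  have hlog : ∀ K ∈ 𝒦, HasContinuousLogOn (fun z => z - a) K := fun K hK =>
    hasContinuousLogOn_sub_of_not_isBounded (hcpt K hK) (haK K hK) fun hb =>
      hno K hK _ (hcpt K hK).isClosed.isOpen_compl.connectedComponentIn hb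
        (mem_connectedComponentIn (haK K hK))
        (frontier_connectedComponentIn_compl_subset (hcpt K hK).isClosed a)
  have hclosed : IsClosed (⋃₀ 𝒦) := by
    rw [sUnion_eq_biUnion]
    exact hfin.isClosed_biUnion fun K hK => (hcpt K hK).isClosed
  exact not_hasContinuousLogOn_sub_of_frontier_subset hclosed hVb ha hfr
    (hasContinuousLogOn_sUnion hfin (fun K hK => (hcpt K hK).isClosed) hdis hlog)

end Plane

section Separation

theorem inter_frontier_nonempty_of_isPreconnected {Y : Type*} [TopologicalSpace Y] {C V : Set Y}
    (hC : IsPreconnected C) (hCV : (C ∩ V).Nonempty) (hCV' : (C ∩ Vᶜ).Nonempty) :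
    (C ∩ frontier V).Nonempty := by
  by_contra! hempty
  have hsplit : ∀ z ∈ C, z ∈ closure V → z ∈ interior V := fun z hz hzV => by
    by_contra hzi
    exact (hempty ▸ ⟨hz, hzV, hzi⟩ : z ∈ (∅ : Set Y))
  obtain ⟨z, -, hzi, hzc⟩ := hC (interior V) (closure V)ᶜ isOpen_interior
    isClosed_closure.isOpen_compl
    (fun z hz => or_iff_not_imp_right.2 fun h => hsplit z hz (not_not.1 h))
    (hCV.imp fun z hz => ⟨hz.1, hsplit z hz.1 (subset_closure hz.2)⟩)
    (hCV'.imp fun z hz => ⟨hz.1, fun h => hz.2 (interior_subset (hsplit z hz.1 h))⟩)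
  exact hzc (interior_subset_closure hzi)

theorem frontier_image_subset {Y Z : Type*} [TopologicalSpace Y] [TopologicalSpace Z] [T2Space Z]
    {f : Y → Z} {V : Set Y} (hV : IsCompact (closure V)) (hf : ContinuousOn f (closure V))
    (ho : IsOpen (f '' V)) : frontier (f '' V) ⊆ f '' frontier V := by
  rw [ho.frontier_eq]
  rintro z ⟨hz, hzV⟩
  obtain ⟨v, hv, rfl⟩ :=
    closure_minimal (image_mono subset_closure) (hV.image_of_continuousOn hf).isClosed hz
  exact ⟨v, ⟨hv, fun h => hzV ⟨v, interior_subset h, rfl⟩⟩, rfl⟩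

-- The maximum principle for the function `z ↦ z - c`.
theorem closure_subset_closedBall_of_frontier_subset {W : Set ℂ} {c : ℂ} {r : ℝ}
    (hW : Bornology.IsBounded W) (hfr : frontier W ⊆ closedBall c r) :
    closure W ⊆ closedBall c r := by
  intro z hz
  rw [mem_closedBall, dist_eq_norm]
  refine Complex.norm_le_of_forall_mem_frontier_norm_le (f := fun z => z - c) hW
    (by fun_prop : Differentiable ℂ fun z => z - c).diffContOnCl (fun w hw => ?_) hz
  simpa [dist_eq_norm] using hfr hw

variable {X : Type*} [TopologicalSpace X]

/-- The planar separation property of the region `N` with base point `b`, standing for `∞`: if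
finitely many disjoint compact subsets of `N` jointly surround a point `a` inside `N`, then one of
them already separates `a` from `b`. Surrounding is expressed through the frontier of an open
set. -/
def HasPlanarSeparation (N : Set X) (b : X) : Prop :=
  ∀ 𝒦 : Set (Set X), 𝒦.Finite → (∀ K ∈ 𝒦, IsCompact K) → (∀ K ∈ 𝒦, K ⊆ N) →
    𝒦.PairwiseDisjoint id → ∀ (V : Set X) (a : X), IsOpen V → V ⊆ N → a ∈ V →
    (∀ K ∈ 𝒦, a ∉ K) → frontier V ⊆ ⋃₀ 𝒦 →
    ∃ K ∈ 𝒦, ∃ W : Set X, IsOpen W ∧ a ∈ W ∧ b ∉ W ∧ frontier W ⊆ K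

variable {ψ : OpenPartialHomeomorph X ℂ} {N : Set X} {b : X} {c : ℂ} {r : ℝ}

theorem HasPlanarSeparation.of_openPartialHomeomorph [T2Space X] (hN : IsCompact N)
    (hNs : N ⊆ ψ.source) (hball : closedBall c r ⊆ ψ.target) (hNr : MapsTo ψ N (closedBall c r))
    (hb : b ∉ ψ.symm '' closedBall c r) : HasPlanarSeparation N b := by
  intro 𝒦 hfin hcpt hsub hdis V a hV hVN ha haK hfr
  have hψN : ContinuousOn ψ N := ψ.continuousOn.mono hNs
  have hinj : InjOn ψ N := ψ.injOn.mono hNs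
  have hVcl : closure V ⊆ N := closure_minimal hVN hN.isClosed
  have hdisψ : (image ψ '' 𝒦).PairwiseDisjoint id := by
    rintro _ ⟨K, hK, rfl⟩ _ ⟨L, hL, rfl⟩ hne
    exact (hdis hK hL fun h => hne (h ▸ rfl)).image hinj (hsub K hK) (hsub L hL)
  have hfrψ : frontier (ψ '' V) ⊆ ⋃₀ (image ψ '' 𝒦) := by
    refine (frontier_image_subset (hN.of_isClosed_subset isClosed_closure hVcl)
      (hψN.mono hVcl) (ψ.isOpen_image_of_subset_source hV (hVN.trans hNs))).trans ?_
    rw [← image_sUnion]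
    exact image_mono hfr
  obtain ⟨_, ⟨K, hK, rfl⟩, W, hWo, hWb, haW, hWK⟩ :=
    exists_isBounded_frontier_subset_of_frontier_subset_sUnion (hfin.image (image ψ))
      (forall_mem_image.2 fun K hK => (hcpt K hK).image_of_continuousOn (hψN.mono (hsub K hK)))
      hdisψ
      (isBounded_closedBall.subset ((image_mono hVN).trans hNr.image_subset))
      (mem_image_of_mem ψ ha)
      (forall_mem_image.2 fun K hK h => haK K hK ((hinj.mem_image_iff (hsub K hK) (hVN ha)).1 h))
      hfrψ
  have hWr : closure W ⊆ closedBall c r := closure_subset_closedBall_of_frontier_subset hWb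
    (hWK.trans ((image_mono (hsub K hK)).trans hNr.image_subset))
  have hWt : closure W ⊆ ψ.target := hWr.trans hball
  have hWso : IsOpen (ψ.symm '' W) :=
    ψ.symm.isOpen_image_of_subset_source hWo (subset_closure.trans hWt)
  refine ⟨K, hK, ψ.symm '' W, hWso, ⟨ψ a, haW, ψ.left_inv (hNs (hVN ha))⟩,
    fun h => hb (image_mono (subset_closure.trans hWr) h), ?_⟩
  refine (frontier_image_subset ((isCompact_closedBall c r).of_isClosed_subset isClosed_closure hWr)
    (ψ.symm.continuousOn.mono hWt) hWso).trans ?_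
  rintro _ ⟨w, hw, rfl⟩
  obtain ⟨k, hk, rfl⟩ := hWK hw
  rwa [ψ.left_inv (hNs (hsub K hK hk))]

end Separation

theorem exists_hasPlanarSeparation_closedBall {X : Type*} [MetricSpace X]
    (ψ : OpenPartialHomeomorph X ℂ) {x : X} (hx : x ∈ ψ.source) :
    ∃ ρ > 0, ∃ b, IsCompact (closedBall x ρ) ∧ ρ < dist x b ∧
      HasPlanarSeparation (closedBall x ρ) b := by
  obtain ⟨τ, hτ, hball⟩ :=
    nhds_basis_closedBall.mem_iff.1 (ψ.open_target.mem_nhds (ψ.map_source hx))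
  have hhalf : closedBall (ψ x) (τ / 2) ⊆ ψ.target :=
    (closedBall_subset_closedBall (by linarith)).trans hball
  set N := ψ.symm '' closedBall (ψ x) (τ / 2)
  have hNcpt : IsCompact N :=
    (isCompact_closedBall _ _).image_of_continuousOn (ψ.symm.continuousOn.mono hhalf)
  have hNx : N ∈ 𝓝 x := by
    rw [← ψ.left_inv hx]
    exact ψ.symm.image_mem_nhds (ψ.map_source hx) (closedBall_mem_nhds _ (half_pos hτ))
  obtain ⟨ρ, hρ, hρN⟩ := nhds_basis_closedBall.mem_iff.1 hNx
  obtain ⟨b, hb⟩ : ∃ b : ℂ, dist b (ψ x) = τ := ⟨ψ x + τ, by simp [hτ.le]⟩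
  have hbN : ψ.symm b ∉ N := by
    rintro ⟨w, hw, hwb⟩
    rw [ψ.symm.injOn (hhalf hw) (hball (mem_closedBall.2 hb.le)) hwb, mem_closedBall, hb] at hw
    linarith
  have hNs : N ⊆ ψ.source := by
    rintro _ ⟨w, hw, rfl⟩
    exact ψ.map_target (hhalf hw)
  have hNr : MapsTo ψ N (closedBall (ψ x) (τ / 2)) := by
    rintro _ ⟨w, hw, rfl⟩
    rwa [ψ.right_inv (hhalf hw)]
  have hρcpt : IsCompact (closedBall x ρ) := hNcpt.of_isClosed_subset isClosed_closedBall hρN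
  refine ⟨ρ, hρ, ψ.symm b, hρcpt, ?_, .of_openPartialHomeomorph hρcpt (hρN.trans hNs) hhalf
    (hNr.mono_left hρN) hbN⟩
  rw [dist_comm]
  exact not_le.1 fun h => hbN (hρN h)

theorem exists_openPartialHomeomorph_complex_of_homeomorph_sphere {X : Type*} [TopologicalSpace X]
    {Ω : Set ↥Sphere2} (hΩ : IsOpen Ω) (f : X ≃ₜ Ω) (x : X) :
    ∃ ψ : OpenPartialHomeomorph X ℂ, x ∈ ψ.source := by
  have : Nonempty X := ⟨x⟩
  have hemb : IsOpenEmbedding fun x => (f x : ↥Sphere2) :=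
    hΩ.isOpenEmbedding_subtypeVal.comp f.isOpenEmbedding
  let e := hemb.toOpenPartialHomeomorph.trans
    (chartAt (EuclideanSpace ℝ (Fin 2)) (f x : ↥Sphere2))
  refine ⟨e.trans Complex.orthonormalBasisOneI.repr.symm.toHomeomorph.toOpenPartialHomeomorph, ?_⟩
  simp [e, mem_chart_source]

/-! ### Chains, weights and doubling -/

section Chains

variable {X : Type*} [MetricSpace X] [MeasurableSpace X] (μ : Measure X) (s : ℝ)

/-- The weight `μ(B(z,r))^{1/s}` of a ball: its `μ`-radius in dimension `s`. -/
def ballWeight (z : X) (r : ℝ) : ℝ≥0∞ :=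
  μ (Metric.ball z r) ^ (1 / s)

/-- The weight `μ(B_{ab})^{1/s}` of the pair `a, b`: the cost of a step from `a` to `b` in a
chain. -/
def pairWeight (a b : X) : ℝ≥0∞ :=
  μ (pairBall a b) ^ (1 / s)

/-- The cost of the first `m` steps of the sequence `z`, the sum minimized by `qDelta`. -/
def chainCost (z : ℕ → X) (m : ℕ) : ℝ≥0∞ :=
  ∑ j ∈ Finset.range m, pairWeight μ s (z j) (z (j + 1))

theorem pairWeight_comm (a b : X) : pairWeight μ s a b = pairWeight μ s b a := by
  simp only [pairWeight, pairBall, dist_comm a b, union_comm]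

variable {δ : ℝ} {a b c : X}

theorem IsDeltaChain.append {z y : ℕ → X} {m n : ℕ} (hz : IsDeltaChain δ a b z m)
    (hy : IsDeltaChain δ b c y n) :
    ∃ v, IsDeltaChain δ a c v (m + n) ∧
      chainCost μ s v (m + n) = chainCost μ s z m + chainCost μ s y n := by
  obtain ⟨hz₀, hzm, hz⟩ := hz
  obtain ⟨hy₀, hyn, hy⟩ := hy
  let v : ℕ → X := fun j => if j < m then z j else y (j - m)
  have hvz : ∀ j ≤ m, v j = z j := by
    intro j hj
    rcases hj.lt_or_eq with h | rfl
    · simp [v, h]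
    · simp [v, hzm, hy₀]
  have hvy : ∀ j, v (m + j) = y j := fun j => by simp [v]
  refine ⟨v, ⟨by rw [hvz 0 (Nat.zero_le _), hz₀], by rw [hvy, hyn], fun j hj => ?_⟩, ?_⟩
  · rcases lt_or_ge j m with h | h
    · rw [hvz j h.le, hvz (j + 1) h]
      exact hz j h
    · obtain ⟨i, rfl⟩ := Nat.exists_eq_add_of_le h
      rw [hvy, add_assoc, hvy]
      exact hy i (by omega)
  · rw [chainCost, Finset.sum_range_add]
    refine congrArg₂ _ (Finset.sum_congr rfl fun j hj => ?_)
      (Finset.sum_congr rfl fun j _ => by rw [hvy, add_assoc, hvy])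
    have hj' := Finset.mem_range.1 hj
    rw [hvz j hj'.le, hvz (j + 1) hj']

theorem IsDeltaChain.reverse {z : ℕ → X} {m : ℕ} (hz : IsDeltaChain δ a b z m) :
    IsDeltaChain δ b a (fun j => z (m - j)) m ∧
      chainCost μ s (fun j => z (m - j)) m = chainCost μ s z m := by
  obtain ⟨hz₀, hzm, hz⟩ := hz
  refine ⟨⟨by simpa using hzm, by simpa using hz₀, fun j hj => ?_⟩, ?_⟩
  · have hstep := hz (m - (j + 1)) (by omega)
    rwa [show m - (j + 1) + 1 = m - j by omega, dist_comm] at hstep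
  · rw [chainCost, ← Finset.sum_range_reflect]
    refine Finset.sum_congr rfl fun j hj => ?_
    have hj' := Finset.mem_range.1 hj
    rw [show m - (m - 1 - j) = j + 1 by omega, show m - (m - 1 - j + 1) = j by omega,
      pairWeight_comm]

theorem IsDeltaChain.segment {z : ℕ → X} {m i j : ℕ} (hz : IsDeltaChain δ a b z m) (hij : i ≤ j)
    (hjm : j ≤ m) :
    IsDeltaChain δ (z i) (z j) (fun k => z (i + k)) (j - i) ∧
      chainCost μ s (fun k => z (i + k)) (j - i) ≤ chainCost μ s z m := by
  refine ⟨⟨rfl, by simp [hij], fun k hk => hz.2.2 (i + k) (by omega)⟩, ?_⟩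
  calc chainCost μ s (fun k => z (i + k)) (j - i)
      = ∑ k ∈ Finset.Ico i j, pairWeight μ s (z k) (z (k + 1)) := by
        rw [Finset.sum_Ico_eq_sum_range]; rfl
    _ ≤ chainCost μ s z m :=
        Finset.sum_le_sum_of_subset fun k hk =>
          Finset.mem_range.2 ((Finset.mem_Ico.1 hk).2.trans_le hjm)

variable {μ s}

theorem qDelta_le_chainCost {z : ℕ → X} {m : ℕ} (hz : IsDeltaChain δ a b z m) :
    qDelta μ s δ a b ≤ chainCost μ s z m :=
  iInf_le_of_le m (iInf_le_of_le z (iInf_le _ hz))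

theorem le_qDelta {A : ℝ≥0∞} (h : ∀ m z, IsDeltaChain δ a b z m → A ≤ chainCost μ s z m) :
    A ≤ qDelta μ s δ a b :=
  le_iInf fun m => le_iInf fun z => le_iInf fun hz => h m z hz

theorem exists_chainCost_lt {A : ℝ≥0∞} (h : qDelta μ s δ a b < A) :
    ∃ m z, IsDeltaChain δ a b z m ∧ chainCost μ s z m < A := by
  by_contra! hle
  exact h.not_ge (le_qDelta hle)

variable (μ s)

theorem qDelta_self (δ : ℝ) (a : X) : qDelta μ s δ a a = 0 :=
  le_antisymm (qDelta_le_chainCost (z := fun _ => a) (m := 0) ⟨rfl, rfl, by simp⟩) zero_le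

theorem qDelta_le_pairWeight (h : dist a b ≤ δ) : qDelta μ s δ a b ≤ pairWeight μ s a b := by
  have hchain : IsDeltaChain δ a b (fun n => if n = 0 then a else b) 1 :=
    ⟨by simp, by simp, by simpa using h⟩
  simpa [chainCost] using qDelta_le_chainCost (μ := μ) (s := s) hchain

theorem qDelta_triangle (δ : ℝ) (a b c : X) :
    qDelta μ s δ a c ≤ qDelta μ s δ a b + qDelta μ s δ b c := by
  rw [qDelta, qDelta, qDelta]
  simp only [ENNReal.iInf_add, ENNReal.add_iInf]
  refine le_iInf fun n => le_iInf fun y => le_iInf fun hy => ?_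
  refine le_iInf fun m => le_iInf fun z => le_iInf fun hz => ?_
  obtain ⟨v, hv, hcost⟩ := hz.append μ s hy
  exact (qDelta_le_chainCost hv).trans hcost.le

theorem qDelta_comm (δ : ℝ) (a b : X) : qDelta μ s δ a b = qDelta μ s δ b a := by
  have hle : ∀ a b, qDelta μ s δ a b ≤ qDelta μ s δ b a := fun a b => le_qDelta fun m z hz =>
    (qDelta_le_chainCost (hz.reverse μ s).1).trans_eq (hz.reverse μ s).2
  exact le_antisymm (hle a b) (hle b a)

theorem qDelta_antitone (a b : X) : Antitone fun δ => qDelta μ s δ a b := fun _ _ h =>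
  le_qDelta fun _ _ hz => qDelta_le_chainCost ⟨hz.1, hz.2.1, fun j hj => (hz.2.2 j hj).trans h⟩

variable {μ s}

theorem exists_lt_qDelta_of_lt_qmu {A : ℝ≥0∞} (h : A < qmu μ s a b) :
    ∃ δ > 0, A < qDelta μ s δ a b := by
  obtain ⟨δ, hA, hδ⟩ := ((frequently_lt_of_lt_limsup (by isBoundedDefault) h).and_eventually
    self_mem_nhdsWithin).exists
  exact ⟨δ, hδ, hA⟩

theorem qmu_le_of_forall_qDelta_le {A : ℝ≥0∞} (h : ∀ δ > 0, qDelta μ s δ a b ≤ A) :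
    qmu μ s a b ≤ A :=
  limsup_le_of_le (by isBoundedDefault) (by filter_upwards [self_mem_nhdsWithin] using h)

theorem ballWeight_mono (hs : 0 ≤ s) {z w : X} {r R : ℝ} (h : dist z w + r ≤ R) :
    ballWeight μ s z r ≤ ballWeight μ s w R :=
  ENNReal.rpow_le_rpow (measure_mono (ball_subset_ball' (by linarith))) (by positivity)

theorem pairWeight_le_ballWeight (hs : 0 ≤ s) {R : ℝ} (h : 2 * dist a b ≤ R) :
    pairWeight μ s a b ≤ ballWeight μ s b R :=
  ENNReal.rpow_le_rpow (measure_mono (union_subset (ball_subset_ball' (by linarith))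
    (ball_subset_ball (by linarith [dist_nonneg (x := a) (y := b)])))) (by positivity)

theorem ballWeight_le_pairWeight (hs : 0 ≤ s) {R : ℝ} (h : R ≤ dist a b) :
    ballWeight μ s a R ≤ pairWeight μ s a b :=
  ENNReal.rpow_le_rpow (measure_mono ((ball_subset_ball h).trans subset_union_left))
    (by positivity)

theorem eventually_lt_qDelta_of_lt_qmu (hs : 0 ≤ s)
    (hμ : ∀ z, Tendsto (ballWeight μ s z) (𝓝[>] 0) (𝓝 0)) {A : ℝ≥0∞} (h : A < qmu μ s a b) :
    ∃ δ > 0, ∀ᶠ p in 𝓝 (a, b), A < qDelta μ s δ p.1 p.2 := by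
  obtain ⟨δ, hδ, hA⟩ := exists_lt_qDelta_of_lt_qmu h
  obtain ⟨e, he, hAe⟩ := ENNReal.lt_iff_exists_add_pos_lt.1 hA
  have hnear : ∀ z : X, ∀ᶠ y in 𝓝 z, qDelta μ s δ y z < e / 2 := fun z => by
    obtain ⟨r, hrw, hr⟩ := (((hμ z).eventually (gt_mem_nhds
      (by simpa using he.ne' : (0 : ℝ≥0∞) < e / 2))).and self_mem_nhdsWithin).exists
    filter_upwards [closedBall_mem_nhds z hδ, ball_mem_nhds z (half_pos hr)] with y hyδ hyr
    exact ((qDelta_le_pairWeight μ s hyδ).trans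
      (pairWeight_le_ballWeight hs (by linarith [mem_ball.1 hyr]))).trans_lt hrw
  refine ⟨δ, hδ, ?_⟩
  filter_upwards [(hnear a).prod_nhds (hnear b)] with p hp
  by_contra! hle
  refine hAe.not_ge ?_
  calc qDelta μ s δ a b ≤ qDelta μ s δ a p.1 + (qDelta μ s δ p.1 p.2 + qDelta μ s δ p.2 b) :=
        (qDelta_triangle μ s δ a p.1 b).trans (add_le_add_right (qDelta_triangle μ s δ _ _ _) _)
    _ ≤ e / 2 + (A + e / 2) := by
        rw [qDelta_comm μ s δ a]
        exact add_le_add hp.1.le (add_le_add hle hp.2.le)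
    _ = A + e := by rw [add_left_comm, ENNReal.add_halves]

theorem eventually_forall_lt_qDelta (hs : 0 ≤ s)
    (hμ : ∀ z, Tendsto (ballWeight μ s z) (𝓝[>] 0) (𝓝 0)) {S : Set (X × X)} (hS : IsCompact S)
    {A : ℝ≥0∞} (h : ∀ p ∈ S, A < qmu μ s p.1 p.2) :
    ∀ᶠ δ in 𝓝 0, ∀ p ∈ S, A < qDelta μ s δ p.1 p.2 := by
  refine hS.eventually_forall_of_forall_eventually fun p hp => ?_
  obtain ⟨δ, hδ, hev⟩ := eventually_lt_qDelta_of_lt_qmu hs hμ (h p hp)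
  rw [nhds_prod_eq]
  filter_upwards [prod_mem_prod (Iic_mem_nhds hδ) hev] with x hx
  exact hx.2.trans_le (qDelta_antitone μ s _ _ (mem_Iic.1 hx.1))

end Chains

section Doubling

variable {X : Type*} [MetricSpace X]

theorem IsLLC.preconnectedSpace {lam : ℝ} (h : IsLLC X lam) : PreconnectedSpace X := by
  refine ⟨isPreconnected_of_forall_pair fun x _ y _ => ?_⟩
  obtain ⟨K, hK, -, hxK, hyK⟩ := (h x (dist x y + 1) (by positivity)).1 x
    (mem_ball_self (by positivity)) y (by rw [mem_ball, dist_comm]; linarith)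
  exact ⟨K, subset_univ _, hxK, hyK, hK.2.isPreconnected⟩

theorem exists_dist_eq_of_le_dist [PreconnectedSpace X] {z p : X} {t : ℝ} (ht : 0 ≤ t)
    (h : t ≤ dist z p) : ∃ y, dist z y = t := by
  obtain ⟨y, -, hy⟩ := isPreconnected_univ.intermediate_value (mem_univ z) (mem_univ p)
    (f := fun y => dist z y) (by fun_prop) ⟨by simpa using ht, h⟩
  exact ⟨y, hy⟩

variable [MeasurableSpace X] {μ : Measure X} {CD : ℝ≥0}

namespace IsDoublingWith

theorem one_le [Nonempty X] (hd : IsDoublingWith μ CD) : (1 : ℝ≥0∞) ≤ CD := by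
  obtain ⟨x⟩ : Nonempty X := inferInstance
  obtain ⟨hpos, htop⟩ := hd.1 x 1 one_pos
  have hle : 1 * μ (Metric.ball x 1) ≤ CD * μ (Metric.ball x 1) := by
    rw [one_mul]
    exact (measure_mono (ball_subset_ball (by norm_num))).trans (hd.2 x 1 one_pos)
  exact (ENNReal.mul_le_mul_iff_left hpos.ne' htop.ne).1 hle

theorem measure_ball_two_pow_mul_le (hd : IsDoublingWith μ CD) (z : X) {r : ℝ} (hr : 0 < r)
    (n : ℕ) : μ (Metric.ball z (2 ^ n * r)) ≤ CD ^ n * μ (Metric.ball z r) := by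
  induction n with
  | zero => simp
  | succ n ih =>
    calc μ (Metric.ball z (2 ^ (n + 1) * r)) = μ (Metric.ball z (2 * (2 ^ n * r))) := by ring_nf
      _ ≤ CD * (CD ^ n * μ (Metric.ball z r)) := (hd.2 z _ (by positivity)).trans (by gcongr)
      _ = CD ^ (n + 1) * μ (Metric.ball z r) := by ring

theorem ballWeight_pos (hd : IsDoublingWith μ CD) {s : ℝ} (z : X) {r : ℝ} (hr : 0 < r) :
    0 < ballWeight μ s z r :=
  ENNReal.rpow_pos (hd.1 z r hr).1 (hd.1 z r hr).2.ne

theorem ballWeight_ne_top (hd : IsDoublingWith μ CD) {s : ℝ} (hs : 0 ≤ s) (z : X) {r : ℝ}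
    (hr : 0 < r) : ballWeight μ s z r ≠ ⊤ :=
  ENNReal.rpow_ne_top_of_nonneg (by positivity) (hd.1 z r hr).2.ne

-- In dimension 2 the weight is a square root, so a factor `4` in the radius costs one factor `CD`.
theorem ballWeight_le (hd : IsDoublingWith μ CD) {z w : X} {r R : ℝ} (hr : 0 < r) (n : ℕ)
    (h : dist z w + R ≤ 4 ^ n * r) : ballWeight μ 2 z R ≤ CD ^ n * ballWeight μ 2 w r := by
  have hball : μ (Metric.ball w (4 ^ n * r)) ≤ (CD ^ n) ^ 2 * μ (Metric.ball w r) := by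
    rw [show (4 : ℝ) ^ n = 2 ^ (n * 2) by rw [mul_comm, pow_mul]; norm_num, ← pow_mul]
    exact hd.measure_ball_two_pow_mul_le w hr (n * 2)
  calc ballWeight μ 2 z R ≤ ballWeight μ 2 w (4 ^ n * r) := ballWeight_mono zero_le_two h
    _ ≤ ((CD ^ n) ^ 2 * μ (Metric.ball w r)) ^ (1 / 2 : ℝ) :=
        ENNReal.rpow_le_rpow hball (by norm_num)
    _ = CD ^ n * ballWeight μ 2 w r := by
        rw [ENNReal.mul_rpow_of_nonneg _ _ (by norm_num), ← ENNReal.rpow_natCast _ 2,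
          ← ENNReal.rpow_mul]
        norm_num [ballWeight]

end IsDoublingWith

theorem ballWeight_two_sq (μ : Measure X) (z : X) (r : ℝ) :
    ballWeight μ 2 z r ^ 2 = μ (Metric.ball z r) := by
  rw [ballWeight, ← ENNReal.rpow_natCast _ 2, ← ENNReal.rpow_mul]
  norm_num

namespace IsDoublingWith

variable [BorelSpace X] [PreconnectedSpace X]

-- A sphere of radius `3s/4` about `z` is nonempty by connectedness, and a ball of radius `s/4`
-- about one of its points takes a fixed share of the measure of `ball z s`.
theorem measure_ball_add_le (hd : IsDoublingWith μ CD) {z p : X} {s : ℝ} (hs : 0 < s)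
    (h : s ≤ dist z p) :
    μ (Metric.ball z s) + CD ^ 3 * μ (Metric.ball z (s / 2)) ≤ CD ^ 3 * μ (Metric.ball z s) := by
  obtain ⟨y, hy⟩ : ∃ y, dist z y = 3 * s / 4 :=
    exists_dist_eq_of_le_dist (p := p) (by positivity) (by linarith)
  have hcover : μ (Metric.ball z s) ≤ CD ^ 3 * μ (Metric.ball y (s / 4)) :=
    (measure_mono (ball_subset_ball' (by rw [hy]; linarith))).trans
      (hd.measure_ball_two_pow_mul_le y (by positivity) 3)
  have hdisj : μ (Metric.ball y (s / 4)) + μ (Metric.ball z (s / 2)) ≤ μ (Metric.ball z s) := by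
    rw [← measure_union _ measurableSet_ball]
    · refine measure_mono (union_subset (ball_subset_ball' ?_) (ball_subset_ball (by linarith)))
      rw [dist_comm, hy]
      linarith
    · exact ball_disjoint_ball (by rw [dist_comm, hy]; linarith)
  calc μ (Metric.ball z s) + CD ^ 3 * μ (Metric.ball z (s / 2))
      ≤ CD ^ 3 * (μ (Metric.ball y (s / 4)) + μ (Metric.ball z (s / 2))) := by
        rw [mul_add]
        gcongr
    _ ≤ CD ^ 3 * μ (Metric.ball z s) := by gcongr

theorem two_le_pow_three [Nontrivial X] (hd : IsDoublingWith μ CD) : (2 : ℝ≥0∞) ≤ CD ^ 3 := by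
  obtain ⟨z, p, hzp⟩ := exists_pair_ne X
  have hs : 0 < dist z p := dist_pos.2 hzp
  obtain ⟨hpos, htop⟩ := hd.1 z (dist z p) hs
  have hhalf : μ (Metric.ball z (dist z p)) ≤ CD ^ 3 * μ (Metric.ball z (dist z p / 2)) := by
    have hdouble := hd.2 z (dist z p / 2) (by positivity)
    rw [mul_div_cancel₀ _ two_ne_zero] at hdouble
    exact hdouble.trans (by gcongr; exact le_self_pow₀ hd.one_le three_ne_zero)
  have htwo : 2 * μ (Metric.ball z (dist z p)) ≤ CD ^ 3 * μ (Metric.ball z (dist z p)) := by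
    rw [two_mul]
    exact (add_le_add_right hhalf _).trans (hd.measure_ball_add_le hs le_rfl)
  exact (ENNReal.mul_le_mul_iff_left hpos.ne' htop.ne).1 htwo

theorem ballWeight_add_le (hd : IsDoublingWith μ CD) {z p : X} {s : ℝ} (hs : 0 < s)
    (h : s ≤ dist z p) :
    ballWeight μ 2 z s + 2 * CD ^ 3 * ballWeight μ 2 z (s / 2)
      ≤ 2 * CD ^ 3 * ballWeight μ 2 z s := by
  have hmeas := hd.measure_ball_add_le hs h
  have hpos : 0 < ballWeight μ 2 z s := hd.ballWeight_pos z hs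
  have hmono : ballWeight μ 2 z (s / 2) ≤ ballWeight μ 2 z s :=
    ballWeight_mono zero_le_two (by simp; linarith)
  have htop := hd.ballWeight_ne_top zero_le_two z hs
  have htop' := hd.ballWeight_ne_top zero_le_two z (half_pos hs)
  rw [← ballWeight_two_sq, ← ballWeight_two_sq] at hmeas
  lift ballWeight μ 2 z s to ℝ≥0 using htop with a
  lift ballWeight μ 2 z (s / 2) to ℝ≥0 using htop' with b
  norm_cast at *
  rw [← NNReal.coe_le_coe] at hmeas hmono ⊢
  push_cast at hmeas ⊢
  have ha : (0 : ℝ) < a := hpos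
  -- `a² ≤ CD³(a² - b²) ≤ 2CD³ a(a - b)`
  have hfactor : (a : ℝ) * a ≤ 2 * CD ^ 3 * (a - b) * a := by
    have hle : (CD : ℝ) ^ 3 * ((a - b) * (a + b)) ≤ CD ^ 3 * ((a - b) * (a + a)) := by gcongr
    linarith
  linarith [le_of_mul_le_mul_right hfactor ha]

theorem sum_ballWeight_add_le (hd : IsDoublingWith μ CD) {z p : X} {s : ℝ} (hs : 0 < s)
    (h : s ≤ dist z p) (n : ℕ) :
    ∑ k ∈ Finset.range n, ballWeight μ 2 z (s / 2 ^ k)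
      + 2 * CD ^ 3 * ballWeight μ 2 z (s / 2 ^ n) ≤ 2 * CD ^ 3 * ballWeight μ 2 z s := by
  induction n with
  | zero => simp
  | succ n ih =>
    refine le_trans ?_ ih
    have hstep := hd.ballWeight_add_le (z := z) (p := p) (s := s / 2 ^ n) (by positivity)
      ((div_le_self hs.le (one_le_pow₀ one_le_two)).trans h)
    rw [div_div, ← pow_succ] at hstep
    rw [Finset.sum_range_succ, add_assoc]
    gcongr

theorem tendsto_ballWeight [Nontrivial X] (hd : IsDoublingWith μ CD) (z : X) :
    Tendsto (ballWeight μ 2 z) (𝓝[>] 0) (𝓝 0) := by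
  obtain ⟨p, hp⟩ := exists_ne z
  have hs : 0 < dist z p := dist_pos.2 hp.symm
  have hsum : ∑' k : ℕ, ballWeight μ 2 z (dist z p / 2 ^ k) ≠ ⊤ :=
    ne_top_of_le_ne_top (by finiteness [hd.ballWeight_ne_top zero_le_two z hs])
      (ENNReal.tsum_le_of_sum_range_le fun n =>
        le_self_add.trans (hd.sum_ballWeight_add_le hs le_rfl n))
  refine ENNReal.tendsto_nhds_zero.2 fun η hη => ?_
  obtain ⟨n, hn⟩ := ((ENNReal.tendsto_atTop_zero_of_tsum_ne_top hsum).eventually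
    (gt_mem_nhds hη)).exists
  filter_upwards [Ioo_mem_nhdsGT (show 0 < dist z p / 2 ^ n by positivity)] with r hr
  exact (ballWeight_mono zero_le_two (by simpa using hr.2.le)).trans hn.le

end IsDoublingWith

end Doubling

/-! ### Cheap separating clusters -/

section Averaging

theorem volume_setOf_lt_le_add_le (a b : ℝ≥0∞) :
    volume {t : ℝ | 0 ≤ t ∧ ENNReal.ofReal t < a ∧ a ≤ ENNReal.ofReal t + b} ≤ b := by
  rcases eq_or_ne b ⊤ with rfl | hb
  · exact le_top
  rcases eq_or_ne a ⊤ with rfl | ha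
  · simp [ENNReal.add_ne_top.2 ⟨ENNReal.ofReal_ne_top, hb⟩]
  calc volume {t : ℝ | 0 ≤ t ∧ ENNReal.ofReal t < a ∧ a ≤ ENNReal.ofReal t + b}
      ≤ volume (Ico (a.toReal - b.toReal) a.toReal) := measure_mono fun t ⟨ht, hta, hat⟩ => by
        refine ⟨?_, (ENNReal.ofReal_lt_iff_lt_toReal ht ha).1 hta⟩
        have hle := ENNReal.toReal_mono (by finiteness) hat
        rw [ENNReal.toReal_add ENNReal.ofReal_ne_top hb, ENNReal.toReal_ofReal ht] at hle
        linarith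
    _ = b := by rw [Real.volume_Ico, _root_.sub_sub_cancel, ENNReal.ofReal_toReal hb]

-- Average over `t`: the point `p` is counted for a set of levels `t` of measure at most `g p`.
open scoped Classical in
theorem exists_lt_sum_level_mul_le {ι : Type*} (N : Finset ι) (u g w : ι → ℝ≥0∞) {R : ℝ≥0∞}
    (hR : R ≠ 0) (hR' : R ≠ ⊤) :
    ∃ t < R, (∑ p ∈ N with t < u p ∧ u p ≤ t + g p, w p) * R ≤ ∑ p ∈ N, w p * g p := by
  let E : ι → Set ℝ := fun p => {t | ENNReal.ofReal t < u p ∧ u p ≤ ENNReal.ofReal t + g p}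
  have hE : ∀ p, MeasurableSet (E p) := fun p =>
    (measurableSet_lt ENNReal.measurable_ofReal measurable_const).inter
      (measurableSet_le measurable_const (ENNReal.measurable_ofReal.add_const _))
  have hind : ∀ p, Measurable ((E p).indicator fun _ => w p) := fun p =>
    measurable_const.indicator (hE p)
  have hvol : volume (Ico 0 R.toReal) = R := by
    rw [Real.volume_Ico, sub_zero, ENNReal.ofReal_toReal hR']
  obtain ⟨t, ht, hle⟩ := exists_le_setLAverage (μ := volume) (s := Ico 0 R.toReal)
    (f := fun t => ∑ p ∈ N, (E p).indicator (fun _ => w p) t) (by rwa [hvol]) (by rwa [hvol])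
    (Finset.measurable_fun_sum _ fun p _ => hind p).aemeasurable
  rw [setLAverage_eq, hvol, lintegral_finsetSum _ fun p _ => hind p,
    ENNReal.le_div_iff_mul_le (.inl hR) (.inl hR')] at hle
  refine ⟨ENNReal.ofReal t, (ENNReal.ofReal_lt_iff_lt_toReal ht.1 hR').2 ht.2, ?_⟩
  calc (∑ p ∈ N with ENNReal.ofReal t < u p ∧ u p ≤ ENNReal.ofReal t + g p, w p) * R
      = (∑ p ∈ N, (E p).indicator (fun _ => w p) t) * R := by
        simp only [Finset.sum_filter, indicator_apply, E, mem_ofPred_eq]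
    _ ≤ ∑ p ∈ N, w p * g p := hle.trans <| Finset.sum_le_sum fun p _ => by
        rw [lintegral_indicator (hE p), setLIntegral_const, Measure.restrict_apply (hE p)]
        gcongr
        have hsub : E p ∩ Ico 0 R.toReal ⊆
            {t | 0 ≤ t ∧ ENNReal.ofReal t < u p ∧ u p ≤ ENNReal.ofReal t + g p} :=
          fun t ht => ⟨ht.2.1, ht.1⟩
        exact (measure_mono hsub).trans (volume_setOf_lt_le_add_le (u p) (g p))

end Averaging

section Nets

variable {X : Type*} [MetricSpace X]

theorem exists_finset_pairwise_lt_dist_subset_biUnion_closedBall {K : Set X} (hK : IsCompact K)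
    {ε : ℝ} (hε : 0 < ε) :
    ∃ N : Finset X, ↑N ⊆ K ∧ (N : Set X).Pairwise (fun p q => ε < dist p q) ∧
      K ⊆ ⋃ p ∈ N, closedBall p ε := by
  lift ε to ℝ≥0 using hε.le
  have hε' : ε / 2 ≠ 0 := (half_pos (NNReal.coe_pos.1 hε)).ne'
  have hfin : packingNumber ε K ≠ ⊤ := by
    obtain ⟨C, -, hC, hcover⟩ := exists_finite_isCover_of_isCompact hε' hK
    have hle := (packingNumber_two_mul_le_externalCoveringNumber (ε / 2) K).trans
      hcover.externalCoveringNumber_le_encard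
    rw [mul_div_cancel₀ _ two_ne_zero] at hle
    exact ne_top_of_le_ne_top (encard_ne_top_iff.2 hC) hle
  have hN : (maximalSeparatedSet ε K).Finite :=
    encard_ne_top_iff.1 (by rwa [encard_maximalSeparatedSet hfin])
  refine ⟨hN.toFinset, by simpa using maximalSeparatedSet_subset, ?_, ?_⟩
  · rw [hN.coe_toFinset]
    intro p hp q hq hpq
    have hlt : (ε : ℝ≥0∞) < edist p q := isSeparated_maximalSeparatedSet hp hq hpq
    rwa [edist_nndist, ENNReal.coe_lt_coe] at hlt
  · simpa [isCover_iff_subset_iUnion_closedBall] using isCover_maximalSeparatedSet hfin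

theorem frontier_ball_diff_biUnion_closedBall_subset {N : Finset X} {P : X → Prop} {c : X}
    {S ε : ℝ} (hcover : closedBall c S ⊆ ⋃ p ∈ N, closedBall p ε)
    (hP : ∀ p ∈ N, P p → dist p c + ε < S) :
    frontier (Metric.ball c S \ ⋃ p ∈ {p ∈ (N : Set X) | ¬ P p}, closedBall p ε) ⊆
      ⋃ p ∈ {p ∈ (N : Set X) | ¬ P p ∧ ∃ q ∈ N, P q ∧ dist q p ≤ 2 * ε}, closedBall p ε := by
  set V := Metric.ball c S \ ⋃ p ∈ {p ∈ (N : Set X) | ¬ P p}, closedBall p ε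
  have hclosed : ∀ Q : X → Prop, IsClosed (⋃ p ∈ {p ∈ (N : Set X) | Q p}, closedBall p ε) :=
    fun Q => (N.finite_toSet.subset (sep_subset _ _)).isClosed_biUnion fun p _ =>
      isClosed_closedBall
  have hVP : closure V ⊆ ⋃ p ∈ {p ∈ (N : Set X) | P p}, closedBall p ε := by
    refine closure_minimal (fun z hz => ?_) (hclosed P)
    obtain ⟨p, hp, hzp⟩ := mem_iUnion₂.1 (hcover (ball_subset_closedBall hz.1))
    exact mem_biUnion ⟨hp, by_contra fun h => hz.2 (mem_biUnion ⟨hp, h⟩ hzp)⟩ hzp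
  intro z hz
  rw [(isOpen_ball.sdiff (hclosed _)).frontier_eq] at hz
  obtain ⟨q, ⟨hq, hPq⟩, hzq⟩ := mem_iUnion₂.1 (hVP hz.1)
  rw [mem_closedBall] at hzq
  have hzS : z ∈ Metric.ball c S := by
    rw [mem_ball]
    linarith [dist_triangle z q c, hP q hq hPq]
  obtain ⟨p, ⟨hp, hPp⟩, hzp⟩ := mem_iUnion₂.1 (by_contra fun h => hz.2 ⟨hzS, h⟩)
  refine mem_biUnion ⟨hp, hPp, q, hq, hPq, ?_⟩ hzp
  rw [mem_closedBall] at hzp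
  linarith [dist_triangle_left q p z]

theorem sum_measure_ball_le [MeasurableSpace X] [BorelSpace X] {μ : Measure X} {CD : ℝ≥0}
    (hd : IsDoublingWith μ CD) {ε S : ℝ} (hε : 0 < ε) (hS : ε ≤ S) {c : X} {N : Finset X}
    (hN : ↑N ⊆ closedBall c S) (hsep : (N : Set X).Pairwise (fun p q => ε < dist p q)) :
    ∑ p ∈ N, μ (Metric.ball p ε) ≤ CD * μ (Metric.ball c (2 * S)) := by
  calc ∑ p ∈ N, μ (Metric.ball p ε) ≤ ∑ p ∈ N, CD * μ (Metric.ball p (ε / 2)) :=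
        Finset.sum_le_sum fun p _ => by
          simpa [mul_div_cancel₀] using hd.2 p (ε / 2) (half_pos hε)
    _ = CD * μ (⋃ p ∈ N, Metric.ball p (ε / 2)) := by
        rw [← Finset.mul_sum, measure_biUnion_finset _ fun _ _ => measurableSet_ball]
        exact fun p hp q hq hpq => ball_disjoint_ball (by linarith [hsep hp hq hpq])
    _ ≤ CD * μ (Metric.ball c (2 * S)) := by
        gcongr
        exact iUnion₂_subset fun p hp => ball_subset_ball' (by linarith [mem_closedBall.1 (hN hp)])

/-- The graph on a finite set `T` of points in which distinct points at distance at most `r` are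
joined. Its connected components are the clusters out of which separating loops are built. -/
def proximityGraph (T : Finset X) (r : ℝ) : SimpleGraph T :=
  SimpleGraph.fromRel fun p q => dist p q ≤ r

theorem proximityGraph_adj {T : Finset X} {r : ℝ} {p q : T} :
    (proximityGraph T r).Adj p q ↔ p ≠ q ∧ dist p q ≤ r := by
  simp [proximityGraph, dist_comm q p]

theorem HasPlanarSeparation.exists_connectedComponent {N : Set X} {a b : X}
    (hsep : HasPlanarSeparation N b) (hN : IsCompact N) {T : Finset X} {ε : ℝ}
    (hTN : ∀ p ∈ T, closedBall p ε ⊆ N) (haT : ∀ p ∈ T, ε < dist a p) {V : Set X}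
    (hV : IsOpen V) (hVN : V ⊆ N) (haV : a ∈ V) (hfr : frontier V ⊆ ⋃ p ∈ T, closedBall p ε) :
    ∃ (C : (proximityGraph T (2 * ε)).ConnectedComponent) (W : Set X), IsOpen W ∧ a ∈ W ∧
      b ∉ W ∧ frontier W ⊆ ⋃ p ∈ C.supp, closedBall (p : X) ε := by
  let K : (proximityGraph T (2 * ε)).ConnectedComponent → Set X :=
    fun C => ⋃ p ∈ C.supp, closedBall (p : X) ε
  have hdisj : ∀ C C', (K C ∩ K C').Nonempty → C = C' := by
    rintro C C' ⟨z, hz, hz'⟩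
    obtain ⟨p, rfl, hzp⟩ := mem_iUnion₂.1 hz
    obtain ⟨q, rfl, hzq⟩ := mem_iUnion₂.1 hz'
    rw [mem_closedBall] at hzp hzq
    by_cases hpq : p = q
    · rw [hpq]
    · exact SimpleGraph.ConnectedComponent.sound (proximityGraph_adj.2 ⟨hpq, by
        rw [Subtype.dist_eq]
        linarith [dist_triangle_left (p : X) q z]⟩).reachable
  refine (hsep (range K) (finite_range K) ?_ ?_ ?_ V a hV hVN haV ?_ ?_).elim ?_
  case refine_6 =>
    rintro _ ⟨⟨C, rfl⟩, hC⟩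
    exact ⟨C, hC⟩
  · rintro _ ⟨C, rfl⟩
    exact C.supp.toFinite.isCompact_biUnion fun p _ =>
      hN.of_isClosed_subset isClosed_closedBall (hTN p p.2)
  · rintro _ ⟨C, rfl⟩
    exact iUnion₂_subset fun p _ => hTN p p.2
  · rintro _ ⟨C, rfl⟩ _ ⟨C', rfl⟩ hne
    exact Set.disjoint_iff_inter_eq_empty.2
      (not_nonempty_iff_eq_empty.1 fun h => hne (congrArg K (hdisj C C' h)))
  · rintro _ ⟨C, rfl⟩ h
    obtain ⟨p, -, hp⟩ := mem_iUnion₂.1 h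
    exact (haT p p.2).not_ge hp
  · intro z hz
    obtain ⟨p, hp, hzp⟩ := mem_iUnion₂.1 (hfr hz)
    exact ⟨_, ⟨(proximityGraph T (2 * ε)).connectedComponentMk ⟨p, hp⟩, rfl⟩,
      mem_biUnion (x := ⟨p, hp⟩) rfl hzp⟩

end Nets

section Loops

variable {X : Type*} [MetricSpace X] [MeasurableSpace X] {μ : Measure X} {CD : ℝ≥0} {ε : ℝ}

theorem IsDoublingWith.qDelta_le_mul_ballWeight (hd : IsDoublingWith μ CD) {p q : X} (hε : 0 < ε)
    (h : dist p q ≤ 2 * ε) : qDelta μ 2 (2 * ε) p q ≤ CD * ballWeight μ 2 q ε := by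
  calc qDelta μ 2 (2 * ε) p q ≤ pairWeight μ 2 p q := qDelta_le_pairWeight μ 2 h
    _ ≤ ballWeight μ 2 q (4 * ε) := pairWeight_le_ballWeight zero_le_two (by linarith)
    _ ≤ CD * ballWeight μ 2 q ε := by
        simpa using hd.ballWeight_le (z := q) (w := q) (R := 4 * ε) hε 1 (by simp)

theorem IsDoublingWith.qDelta_le_sum_of_walk (hd : IsDoublingWith μ CD) (hε : 0 < ε)
    {T : Finset X} {p q : T} (W : (proximityGraph T (2 * ε)).Walk p q) :
    qDelta μ 2 (2 * ε) p q ≤ (W.support.tail.map fun v : T => CD * ballWeight μ 2 v ε).sum := by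
  induction W with
  | nil => simp [qDelta_self]
  | @cons a b c h W ih =>
    rw [SimpleGraph.Walk.support_cons, List.tail_cons, ← W.cons_tail_support, List.map_cons,
      List.sum_cons]
    exact (qDelta_triangle μ 2 _ _ b _).trans
      (add_le_add (hd.qDelta_le_mul_ballWeight hε (proximityGraph_adj.1 h).2) ih)

theorem IsDoublingWith.qDelta_le_of_reachable (hd : IsDoublingWith μ CD) (hε : 0 < ε)
    {T : Finset X} {p q : T} (h : (proximityGraph T (2 * ε)).Reachable p q) :
    qDelta μ 2 (2 * ε) p q ≤ CD * ∑ v ∈ T, ballWeight μ 2 v ε := by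
  classical
  obtain ⟨W, hW⟩ := h.exists_isPath
  calc qDelta μ 2 (2 * ε) p q
      ≤ ∑ v ∈ W.support.tail.toFinset, CD * ballWeight μ 2 (v : X) ε := by
        rw [List.sum_toFinset _ hW.support_nodup.tail]
        exact hd.qDelta_le_sum_of_walk hε W
    _ ≤ ∑ v : T, CD * ballWeight μ 2 (v : X) ε :=
        Finset.sum_le_sum_of_subset (Finset.subset_univ _)
    _ = CD * ∑ v ∈ T, ballWeight μ 2 v ε := by
        rw [Finset.mul_sum, Finset.sum_coe_sort T fun v => CD * ballWeight μ 2 v ε]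

/-- A cluster `T` of points in the annulus `s < dist p c ≤ S` whose `ε`-neighborhood separates `c`
from `b`, in the sense that it contains the frontier of an open set `V` with `c ∈ V` and `b ∉ V`.
The number `A` bounds the cost of travelling inside the cluster. -/
structure IsSeparatingLoop (μ : Measure X) (b c : X) (s S ε : ℝ) (A : ℝ≥0∞) (T V : Set X) :
    Prop where
  nonempty : T.Nonempty
  isOpen : IsOpen V
  mem : c ∈ V
  notMem : b ∉ V
  frontier_subset : frontier V ⊆ ⋃ p ∈ T, closedBall p ε
  annulus : ∀ p ∈ T, s < dist p c ∧ dist p c ≤ S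
  ballWeight_le : ∀ p ∈ T, ballWeight μ 2 p ε ≤ A
  qDelta_le : ∀ p ∈ T, ∀ q ∈ T, qDelta μ 2 (2 * ε) p q ≤ A

-- The points satisfying `P` fill an open set around `c`; its frontier lies near those points
-- violating `P` that have a neighbor satisfying it, and planarity isolates one cluster of them.
theorem HasPlanarSeparation.exists_isSeparatingLoop {K : Set X} {b c : X}
    (hsep : HasPlanarSeparation K b) (hK : IsCompact K) (hd : IsDoublingWith μ CD) {s S : ℝ}
    (hε : 0 < ε) (hεs : ε ≤ s) (hsS : s ≤ S) (hSK : closedBall c (S + ε) ⊆ K) {N : Finset X}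
    (hN : ↑N ⊆ closedBall c S) (hcover : closedBall c S ⊆ ⋃ p ∈ N, closedBall p ε) {P : X → Prop}
    [DecidablePred P] (hPs : ∀ p ∈ N, ¬ P p → s < dist p c)
    (hPS : ∀ p ∈ N, P p → dist p c + ε < S) :
    ∃ T V, IsSeparatingLoop μ b c s S ε
      (CD * ∑ p ∈ N with ¬ P p ∧ ∃ q ∈ N, P q ∧ dist q p ≤ 2 * ε, ballWeight μ 2 p ε) T V := by
  set T : Finset X := {p ∈ N | ¬ P p ∧ ∃ q ∈ N, P q ∧ dist q p ≤ 2 * ε} with hT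
  have hTN : ∀ p ∈ T, p ∈ N ∧ s < dist p c := fun p hp =>
    ⟨(Finset.mem_filter.1 hp).1, hPs p (Finset.mem_filter.1 hp).1 (Finset.mem_filter.1 hp).2.1⟩
  have hopen : IsOpen (Metric.ball c S \ ⋃ p ∈ {p ∈ (N : Set X) | ¬ P p}, closedBall p ε) :=
    isOpen_ball.sdiff <| (N.finite_toSet.subset (sep_subset _ _)).isClosed_biUnion fun p _ =>
      isClosed_closedBall
  have hmem : c ∈ Metric.ball c S \ ⋃ p ∈ {p ∈ (N : Set X) | ¬ P p}, closedBall p ε := by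
    refine ⟨mem_ball_self (by linarith), fun h => ?_⟩
    obtain ⟨p, hp, hcp⟩ := mem_iUnion₂.1 h
    linarith [hPs p hp.1 hp.2, mem_closedBall'.1 hcp]
  obtain ⟨C, W, hW, hcW, hbW, hfr⟩ := hsep.exists_connectedComponent hK (T := T)
    (ε := ε) (fun p hp => (closedBall_subset_closedBall' (by
      linarith [mem_closedBall.1 (hN (hTN p hp).1)])).trans hSK)
    (fun p hp => by rw [dist_comm]; linarith [(hTN p hp).2]) hopen
    (sdiff_subset.trans (ball_subset_closedBall.trans
      ((closedBall_subset_closedBall (by linarith)).trans hSK))) hmem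
    (by simpa [hT] using frontier_ball_diff_biUnion_closedBall_subset hcover hPS)
  refine ⟨Subtype.val '' C.supp, W, C.nonempty_supp.image _, hW, hcW, hbW,
    by rwa [biUnion_image], ?_, ?_, ?_⟩
  · rintro _ ⟨p, -, rfl⟩
    exact ⟨(hTN p p.2).2, hN (hTN p p.2).1⟩
  · rintro _ ⟨p, -, rfl⟩
    have : Nonempty X := ⟨c⟩
    exact (Finset.single_le_sum (f := fun p => ballWeight μ 2 p ε) (fun _ _ => zero_le) p.2).trans
      (le_mul_of_one_le_left' hd.one_le)
  · rintro _ ⟨p, hp, rfl⟩ _ ⟨q, hq, rfl⟩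
    exact hd.qDelta_le_of_reachable hε (C.reachable_of_mem_supp hp hq)

/-- The `qDelta`-distance from the set `B`. Its level sets are the source of separating loops. -/
def qDeltaFrom (μ : Measure X) (s : ℝ) (B : Set X) (δ : ℝ) (p : X) : ℝ≥0∞ :=
  ⨅ a ∈ B, qDelta μ s δ a p

theorem qDeltaFrom_eq_zero (μ : Measure X) (s δ : ℝ) {B : Set X} {p : X} (hp : p ∈ B) :
    qDeltaFrom μ s B δ p = 0 :=
  le_antisymm ((iInf₂_le p hp).trans_eq (qDelta_self μ s δ p)) zero_le

theorem qDeltaFrom_le_add (μ : Measure X) (s : ℝ) (B : Set X) (δ : ℝ) (p q : X) :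
    qDeltaFrom μ s B δ q ≤ qDeltaFrom μ s B δ p + qDelta μ s δ p q := by
  simp only [qDeltaFrom, ENNReal.iInf_add]
  exact le_iInf₂ fun a ha => (iInf₂_le a ha).trans (qDelta_triangle μ s δ a p q)

theorem IsDoublingWith.sum_ballWeight_mul_le [BorelSpace X] (hd : IsDoublingWith μ CD) {S : ℝ}
    (hε : 0 < ε) (hS : ε ≤ S) {c : X} {N : Finset X} (hN : ↑N ⊆ closedBall c S)
    (hsep : (N : Set X).Pairwise (fun p q => ε < dist p q)) :
    ∑ p ∈ N, ballWeight μ 2 p ε * (CD * ballWeight μ 2 p ε)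
      ≤ CD ^ 2 * μ (Metric.ball c (2 * S)) := by
  calc ∑ p ∈ N, ballWeight μ 2 p ε * (CD * ballWeight μ 2 p ε)
      = CD * ∑ p ∈ N, μ (Metric.ball p ε) := by
        rw [Finset.mul_sum]
        exact Finset.sum_congr rfl fun p _ => by rw [← ballWeight_two_sq]; ring
    _ ≤ CD * (CD * μ (Metric.ball c (2 * S))) := by
        gcongr
        exact sum_measure_ball_le hd hε hS hN hsep
    _ = CD ^ 2 * μ (Metric.ball c (2 * S)) := by ring

-- Length–area argument: the level sets `t < u ≤ t + (step)` of the `qDelta`-distance `u` from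
-- `closedBall c s`, averaged over `0 < t < R`, have total weight at most (area)/`R`.
theorem HasPlanarSeparation.exists_isSeparatingLoop_of_le_qDelta [BorelSpace X] {K : Set X}
    {b c : X} (hsep : HasPlanarSeparation K b) (hK : IsCompact K) (hd : IsDoublingWith μ CD)
    {s S : ℝ} (hε : 0 < ε) (hεs : ε ≤ s) (hsS : s ≤ S) (hSK : closedBall c (S + ε) ⊆ K)
    {R : ℝ≥0∞} (hR : R ≠ 0) (hR' : R ≠ ⊤)
    (hle : ∀ a p, dist a c ≤ s → S - ε ≤ dist p c → dist p c ≤ S → R ≤ qDelta μ 2 (2 * ε) a p) :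
    ∃ T V A, IsSeparatingLoop μ b c s S ε A T V ∧ A * R ≤ CD ^ 3 * μ (Metric.ball c (2 * S)) := by
  classical
  have hcS : IsCompact (closedBall c S) := hK.of_isClosed_subset isClosed_closedBall
    ((closedBall_subset_closedBall (by linarith)).trans hSK)
  obtain ⟨N, hN, hNsep, hcover⟩ :=
    exists_finset_pairwise_lt_dist_subset_biUnion_closedBall hcS hε
  let u : X → ℝ≥0∞ := qDeltaFrom μ 2 (closedBall c s) (2 * ε)
  obtain ⟨t, htR, ht⟩ := exists_lt_sum_level_mul_le N u (fun p => CD * ballWeight μ 2 p ε)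
    (fun p => ballWeight μ 2 p ε) hR hR'
  obtain ⟨T, V, hT⟩ := hsep.exists_isSeparatingLoop hK hd hε hεs hsS hSK hN hcover
    (P := fun p => u p ≤ t)
    (fun p _ hp => by
      by_contra! hps
      exact hp ((qDeltaFrom_eq_zero μ 2 _ hps).trans_le zero_le))
    (fun p hp hpt => by
      by_contra! hpS
      have hRp : R ≤ u p := le_iInf₂ fun a ha =>
        hle a p ha (by linarith) (hN hp)
      exact (hRp.trans hpt).not_gt htR)
  refine ⟨T, V, _, hT, ?_⟩
  rw [mul_assoc, pow_succ', mul_assoc]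
  refine mul_le_mul_right ?_ _
  refine le_trans ?_ (ht.trans (hd.sum_ballWeight_mul_le hε (hεs.trans hsS) hN hNsep))
  refine mul_le_mul_left (Finset.sum_le_sum_of_subset fun p hp => ?_) R
  obtain ⟨hpN, hpt, q, -, hqt, hqp⟩ := Finset.mem_filter.1 hp
  refine Finset.mem_filter.2 ⟨hpN, not_le.1 hpt, (qDeltaFrom_le_add μ 2 _ _ q p).trans ?_⟩
  exact add_le_add hqt (hd.qDelta_le_mul_ballWeight hε hqp)

end Loops

/-! ### Loops and radial chains at one scale -/

section OneScale

variable {X : Type*} [MetricSpace X] [MeasurableSpace X] {μ : Measure X} {CD CW : ℝ≥0}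
  {lam : ℝ} {b c : X}

theorem IsDoublingWith.ballWeight_le_of_le_mul (hd : IsDoublingWith μ CD) {l : ℕ}
    (hl : lam ≤ 2 ^ l) (z : X) {r R : ℝ} (hr : 0 < r) (hR : R ≤ 16 * lam * r) :
    ballWeight μ 2 z R ≤ CD ^ (2 + l) * ballWeight μ 2 z r := by
  refine hd.ballWeight_le hr _ ?_
  have hl' : lam ≤ 4 ^ l := hl.trans (by gcongr; norm_num)
  calc dist z z + R ≤ 16 * lam * r := by rwa [dist_self, zero_add]
    _ ≤ 16 * 4 ^ l * r := by gcongr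
    _ = 4 ^ (2 + l) * r := by ring

theorem IsWMDM.ne_zero [Nontrivial X] (hw : IsWMDM μ 2 CW) (hd : IsDoublingWith μ CD) :
    (CW : ℝ≥0∞) ≠ 0 := by
  intro hzero
  obtain ⟨x, y, hxy⟩ := exists_pair_ne X
  have hle := hw x y
  rw [hzero, zero_mul] at hle
  exact ((hd.ballWeight_pos x (dist_pos.2 hxy)).trans_le
    (ballWeight_le_pairWeight zero_le_two le_rfl)).not_ge hle

theorem IsWMDM.two_mul_mul_pow_ne_zero [Nontrivial X] (hw : IsWMDM μ 2 CW)
    (hd : IsDoublingWith μ CD) (n : ℕ) : 2 * ((CW : ℝ≥0∞) * CD ^ n) ≠ 0 :=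
  mul_ne_zero two_ne_zero <| mul_ne_zero (hw.ne_zero hd) <|
    pow_ne_zero _ (one_pos.trans_le hd.one_le).ne'

namespace IsSeparatingLoop

variable {s S ε : ℝ} {A : ℝ≥0∞} {T V : Set X}

theorem mono (h : IsSeparatingLoop μ b c s S ε A T V) {A' : ℝ≥0∞} (hA : A ≤ A') :
    IsSeparatingLoop μ b c s S ε A' T V :=
  { h with
    ballWeight_le := fun p hp => (h.ballWeight_le p hp).trans hA
    qDelta_le := fun p hp q hq => (h.qDelta_le p hp q hq).trans hA }

theorem exists_dist_le (h : IsSeparatingLoop μ b c s S ε A T V) {K : Set X}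
    (hK : IsPreconnected K) {v w : X} (hv : v ∈ K) (hvV : v ∈ V) (hw : w ∈ K) (hwV : w ∉ V) :
    ∃ z ∈ K, ∃ p ∈ T, dist z p ≤ ε := by
  obtain ⟨z, hzK, hz⟩ :=
    inter_frontier_nonempty_of_isPreconnected hK ⟨v, hv, hvV⟩ ⟨w, hw, hwV⟩
  obtain ⟨p, hp, hzp⟩ := mem_iUnion₂.1 (h.frontier_subset hz)
  exact ⟨z, hzK, p, hp, hzp⟩

-- A continuum from `c` to `b` avoiding a ball about a point of `T` has to meet `T` elsewhere.
theorem exists_le_dist (h : IsSeparatingLoop μ b c s S ε A T V) (hL : IsLLC X lam) (hs : 0 < s)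
    (hε : ε ≤ s / lam / 2) (hb : s + S ≤ dist c b) :
    ∃ p ∈ T, ∃ q ∈ T, s / lam / 2 ≤ dist p q := by
  obtain ⟨p, hp⟩ := h.nonempty
  obtain ⟨hsp, hpS⟩ := h.annulus p hp
  obtain ⟨K, hK, hKp, hcK, hbK⟩ := (hL p s hs).2 c b
    (by rw [mem_ball, not_lt, dist_comm]; exact hsp.le)
    (by rw [mem_ball, not_lt]; linarith [dist_triangle_left c b p, dist_comm p b])
  obtain ⟨z, hzK, q, hq, hzq⟩ := h.exists_dist_le hK.2.isPreconnected hcK h.mem hbK h.notMem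
  have hzp : s / lam ≤ dist z p := not_lt.1 (hKp hzK)
  exact ⟨p, hp, q, hq, by linarith [dist_triangle_right z p q]⟩

theorem mem_of_dist_lt (h : IsSeparatingLoop μ b c s S ε A T V) (hL : IsLLC X lam) {a : X} {r : ℝ}
    (ha : dist a c < r) (hr : lam * r + ε ≤ s) : a ∈ V := by
  by_contra haV
  have hr₀ : 0 < r := dist_nonneg.trans_lt ha
  obtain ⟨K, hK, hKc, hcK, haK⟩ := (hL c r hr₀).1 c (mem_ball_self hr₀) a ha
  obtain ⟨z, hzK, p, hp, hzp⟩ := h.exists_dist_le hK.2.isPreconnected hcK h.mem haK haV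
  linarith [(h.annulus p hp).1, mem_ball.1 (hKc hzK), dist_triangle_left p c z]

theorem notMem_of_le_dist (h : IsSeparatingLoop μ b c s S ε A T V) (hL : IsLLC X lam) {e : X}
    {R : ℝ} (hR₀ : 0 < R) (he : R ≤ dist e c) (hb : R ≤ dist b c) (hR : S + ε < R / lam) :
    e ∉ V := by
  intro heV
  obtain ⟨K, hK, hKc, heK, hbK⟩ := (hL c R hR₀).2 e b he.not_gt hb.not_gt
  obtain ⟨z, hzK, p, hp, hzp⟩ := h.exists_dist_le hK.2.isPreconnected heK heV hbK h.notMem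
  have hzc : R / lam ≤ dist z c := not_lt.1 (hKc hzK)
  linarith [(h.annulus p hp).2, dist_triangle z p c]

end IsSeparatingLoop

/-- The set `T` is a barrier between `a` and `e`: every `δ`-chain from `a` to `e` comes within
distance `r` of `T`. -/
def IsChainBarrier (T : Set X) (a e : X) (δ r : ℝ) : Prop :=
  ∀ z m, IsDeltaChain δ a e z m → ∃ j ≤ m, ∃ q ∈ T, dist (z j) q ≤ r

theorem IsSeparatingLoop.isChainBarrier {s S ε : ℝ} {A : ℝ≥0∞} {T V : Set X}
    (h : IsSeparatingLoop μ b c s S ε A T V) (hL : IsLLC X lam) (hlam : 1 ≤ lam) (hε : 0 < ε)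
    {a e : X} (ha : a ∈ V) (he : e ∉ V) : IsChainBarrier T a e (2 * ε) (4 * lam * ε) := by
  rintro z m ⟨rfl, rfl, hz⟩
  obtain ⟨j, hjm, hj, hj'⟩ : ∃ j < m, z j ∈ V ∧ z (j + 1) ∉ V := by
    by_contra! hstay
    have hall : ∀ j ≤ m, z j ∈ V := fun j => by
      induction j with
      | zero => exact fun _ => ha
      | succ j ih => exact fun hj => hstay j hj (ih (Nat.le_of_succ_le hj))
    exact he (hall m le_rfl)
  obtain ⟨K, hK, hKj, hjK, hjK'⟩ := (hL (z j) (3 * ε) (by positivity)).1 (z j)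
    (mem_ball_self (by positivity)) (z (j + 1)) (by
      rw [mem_ball, dist_comm]; linarith [hz j hjm])
  obtain ⟨v, hvK, q, hq, hvq⟩ := h.exists_dist_le hK.2.isPreconnected hjK hj hjK' hj'
  have hεlam : ε ≤ lam * ε := le_mul_of_one_le_left hε.le hlam
  exact ⟨j, hjm.le, q, hq, by
    linarith [dist_triangle_left (z j) q v, mem_ball.1 (hKj hvK)]⟩

/-- The points `a` (close to `c`) and `e` (far from `c`), relative to the scale `s`, are joined by
a `2ε`-chain of cost less than `D`. -/
structure IsRadialPair (μ : Measure X) (c : X) (lam s ε : ℝ) (D : ℝ≥0∞) (a e : X) : Prop where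
  dist_le : dist a c ≤ s / (8 * lam)
  le_dist : 8 * lam * s - ε ≤ dist e c
  qDelta_lt : qDelta μ 2 (2 * ε) a e < D

theorem IsSeparatingLoop.isChainBarrier_of_isRadialPair {s s' ε : ℝ} {A D : ℝ≥0∞} {T V : Set X}
    {z a e : X} (h : IsSeparatingLoop μ b c s (2 * s) ε A T V)
    (hr : IsRadialPair μ z lam s' ε D a e) (hL : IsLLC X lam) (hlam : 1 ≤ lam) (hε : 0 < ε)
    (hs' : 0 < s') (hεs : ε ≤ s' / 8) (hss' : s' / 2 ≤ s) (hs's : s ≤ s')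
    (hzc : dist z c ≤ s' / (8 * lam)) (hb : 6 * lam * s' ≤ dist b c) :
    IsChainBarrier T a e (2 * ε) (4 * lam * ε) := by
  have : 0 < lam := one_pos.trans_le hlam
  have hdiv : s' / (8 * lam) ≤ s' / 8 := by gcongr; linarith
  have hpos : 0 < s' / (8 * lam) := by positivity
  have hmul : s' ≤ lam * s' := le_mul_of_one_le_left hs'.le hlam
  refine h.isChainBarrier hL hlam hε
    (h.mem_of_dist_lt hL (r := 3 * (s' / (8 * lam))) ?_ ?_)
    (h.notMem_of_le_dist hL (R := 6 * lam * s') (by positivity) ?_ hb ?_)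
  · linarith [dist_triangle a z c, hr.dist_le]
  · rw [show lam * (3 * (s' / (8 * lam))) = 3 * s' / 8 by field_simp]
    linarith
  · linarith [dist_triangle_right e z c, dist_comm z c, hr.le_dist]
  · rw [show 6 * lam * s' / lam = 6 * s' by field_simp]
    linarith

theorem IsDeltaChain.qDelta_le {δ : ℝ} {a e : X} {s : ℝ} {z : ℕ → X} {m i j : ℕ}
    (hz : IsDeltaChain δ a e z m) (hi : i ≤ m) (hj : j ≤ m) :
    qDelta μ s δ (z i) (z j) ≤ chainCost μ s z m := by
  rcases le_total i j with hij | hji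
  · exact (qDelta_le_chainCost (hz.segment μ s hij hj).1).trans (hz.segment μ s hij hj).2
  · rw [qDelta_comm]
    exact (qDelta_le_chainCost (hz.segment μ s hji hi).1).trans (hz.segment μ s hji hi).2

theorem IsSeparatingLoop.qDelta_le_of_dist_le {s S ε δ : ℝ} {A : ℝ≥0∞} {T V : Set X}
    (h : IsSeparatingLoop μ b c s S ε A T V) (hd : IsDoublingWith μ CD) {l : ℕ} (hlam : 1 ≤ lam)
    (hl : lam ≤ 2 ^ l) (hε : 0 < ε) (hδ : 4 * lam * ε ≤ δ) {p q v : X} (hp : p ∈ T) (hq : q ∈ T)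
    (hvq : dist v q ≤ 4 * lam * ε) : qDelta μ 2 δ p v ≤ 2 * (CD ^ (2 + l) * A) := by
  have : Nonempty X := ⟨p⟩
  have hmul : ε ≤ lam * ε := le_mul_of_one_le_left hε.le hlam
  have hpq : qDelta μ 2 δ p q ≤ CD ^ (2 + l) * A :=
    (qDelta_antitone μ 2 p q (by linarith)).trans <|
      (h.qDelta_le p hp q hq).trans (le_mul_of_one_le_left' (one_le_pow₀ hd.one_le))
  have hqv : qDelta μ 2 δ q v ≤ CD ^ (2 + l) * A := by
    calc qDelta μ 2 δ q v ≤ pairWeight μ 2 v q := by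
          rw [qDelta_comm]
          exact qDelta_le_pairWeight μ 2 (hvq.trans hδ)
      _ ≤ ballWeight μ 2 q (8 * lam * ε) := pairWeight_le_ballWeight zero_le_two (by linarith)
      _ ≤ CD ^ (2 + l) * ballWeight μ 2 q ε := hd.ballWeight_le_of_le_mul hl q hε (by linarith)
      _ ≤ CD ^ (2 + l) * A := by gcongr; exact h.ballWeight_le q hq
  rw [two_mul]
  exact (qDelta_triangle μ 2 δ p q v).trans (add_le_add hpq hqv)

-- A cheap chain from `a` to `e` passes close to both loops, so it joins them.
theorem IsSeparatingLoop.qDelta_le_of_isChainBarrier {s₁ s₂ S₁ S₂ ε δ : ℝ} {A₁ A₂ D : ℝ≥0∞}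
    {T₁ V₁ T₂ V₂ : Set X} {c₁ c₂ a e : X} (h₁ : IsSeparatingLoop μ b c₁ s₁ S₁ ε A₁ T₁ V₁)
    (h₂ : IsSeparatingLoop μ b c₂ s₂ S₂ ε A₂ T₂ V₂)
    (hT₁ : IsChainBarrier T₁ a e (2 * ε) (4 * lam * ε))
    (hT₂ : IsChainBarrier T₂ a e (2 * ε) (4 * lam * ε)) (hD : qDelta μ 2 (2 * ε) a e < D)
    (hd : IsDoublingWith μ CD) {l : ℕ} (hlam : 1 ≤ lam) (hl : lam ≤ 2 ^ l) (hε : 0 < ε)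
    (hδ : 4 * lam * ε ≤ δ) {p₁ p₂ : X} (hp₁ : p₁ ∈ T₁) (hp₂ : p₂ ∈ T₂) :
    qDelta μ 2 δ p₁ p₂ ≤ 2 * (CD ^ (2 + l) * A₁) + (D + 2 * (CD ^ (2 + l) * A₂)) := by
  obtain ⟨m, z, hz, hcost⟩ := exists_chainCost_lt hD
  obtain ⟨i, hi, q₁, hq₁, hzq₁⟩ := hT₁ z m hz
  obtain ⟨j, hj, q₂, hq₂, hzq₂⟩ := hT₂ z m hz
  have hmul : ε ≤ lam * ε := le_mul_of_one_le_left hε.le hlam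
  have hij : qDelta μ 2 δ (z i) (z j) ≤ D :=
    (qDelta_antitone μ 2 _ _ (by linarith)).trans ((hz.qDelta_le hi hj).trans hcost.le)
  have hjp₂ := h₂.qDelta_le_of_dist_le hd hlam hl hε hδ hp₂ hq₂ hzq₂
  rw [qDelta_comm] at hjp₂
  exact (qDelta_triangle μ 2 δ p₁ (z i) p₂).trans <|
    add_le_add (h₁.qDelta_le_of_dist_le hd hlam hl hε hδ hp₁ hq₁ hzq₁) <|
      (qDelta_triangle μ 2 δ (z i) (z j) p₂).trans (add_le_add hij hjp₂)

variable [BorelSpace X]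

theorem IsWMDM.eventually_lt_qDelta [PreconnectedSpace X] [Nontrivial X] (hw : IsWMDM μ 2 CW)
    (hd : IsDoublingWith μ CD) {r R d : ℝ} (hr : IsCompact (closedBall c r)) (hd₀ : 0 < d)
    (hR : 0 < R) (n : ℕ) (hn : r + R ≤ 4 ^ n * d) :
    ∀ᶠ ε in 𝓝[>] (0 : ℝ), ∀ a p, dist a c ≤ r → dist p c ≤ r → d ≤ dist a p →
      ballWeight μ 2 c R / (2 * (CW * CD ^ n)) < qDelta μ 2 (2 * ε) a p := by
  have hlt : ∀ p ∈ closedBall c r ×ˢ closedBall c r ∩ {p | d ≤ dist p.1 p.2},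
      ballWeight μ 2 c R / (2 * (CW * CD ^ n)) < qmu μ 2 p.1 p.2 := by
    rintro ⟨a, p⟩ ⟨⟨ha, -⟩, hap⟩
    rw [mem_closedBall'] at ha
    refine ENNReal.div_lt_of_lt_mul' ?_
    calc ballWeight μ 2 c R < 2 * ballWeight μ 2 c R := by
          rw [two_mul]
          exact ENNReal.lt_add_right (hd.ballWeight_ne_top zero_le_two c hR)
            (hd.ballWeight_pos c hR).ne'
      _ ≤ 2 * (CD ^ n * ballWeight μ 2 a d) := by
          gcongr
          exact hd.ballWeight_le hd₀ n (by linarith)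
      _ ≤ 2 * (CD ^ n * (CW * qmu μ 2 a p)) := by
          gcongr
          exact (ballWeight_le_pairWeight zero_le_two hap).trans (hw a p)
      _ = 2 * (CW * CD ^ n) * qmu μ 2 a p := by ring
  have hev := eventually_forall_lt_qDelta zero_le_two hd.tendsto_ballWeight
    ((hr.prod hr).inter_right (isClosed_le continuous_const continuous_dist)) hlt
  have hlim : Tendsto (fun ε : ℝ => 2 * ε) (𝓝[>] 0) (𝓝 0) :=
    tendsto_nhdsWithin_of_tendsto_nhds <| by
      simpa using (continuous_const_mul (2 : ℝ)).tendsto 0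
  filter_upwards [hlim.eventually hev] with ε hε a p ha hp hap
  exact hε (a, p) ⟨⟨ha, hp⟩, hap⟩

theorem le_mul_mul_of_mul_div_le_mul_sq {A B C W : ℝ≥0∞} (hW₀ : W ≠ 0) (hW : W ≠ ⊤) (hB₀ : B ≠ 0)
    (hB : B ≠ ⊤) (h : A * (W / B) ≤ C * W ^ 2) : A ≤ C * B * W := by
  refine (ENNReal.mul_le_mul_iff_left hW₀ hW).1 ?_
  calc A * W = A * (W / B) * B := by rw [mul_assoc, ENNReal.div_mul_cancel hB₀ hB]
    _ ≤ C * W ^ 2 * B := by gcongr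
    _ = C * B * W * W := by ring

theorem IsWMDM.eventually_exists_isSeparatingLoop [PreconnectedSpace X] [Nontrivial X]
    (hw : IsWMDM μ 2 CW) (hd : IsDoublingWith μ CD) {K : Set X} (hsep : HasPlanarSeparation K b)
    (hK : IsCompact K) {s : ℝ} (hs : 0 < s) (hcK : closedBall c (3 * s) ⊆ K) :
    ∀ᶠ ε in 𝓝[>] (0 : ℝ), ∃ T V,
      IsSeparatingLoop μ b c s (2 * s) ε (2 * CW * CD ^ 6 * ballWeight μ 2 c s) T V := by
  have hcK' : closedBall c (2 * s) ⊆ K := (closedBall_subset_closedBall (by linarith)).trans hcK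
  filter_upwards [hw.eventually_lt_qDelta hd (hK.of_isClosed_subset isClosed_closedBall hcK')
    (half_pos hs) (show 0 < 4 * s by positivity) 2 (by linarith), Ioo_mem_nhdsGT (half_pos hs)]
    with ε hlow hε
  set W := ballWeight μ 2 c (4 * s)
  set B : ℝ≥0∞ := 2 * (CW * CD ^ 2)
  have hW₀ : W ≠ 0 := (hd.ballWeight_pos c (by positivity)).ne'
  have hW : W ≠ ⊤ := hd.ballWeight_ne_top zero_le_two c (by positivity)
  have hB₀ : B ≠ 0 := hw.two_mul_mul_pow_ne_zero hd 2
  have hB : B ≠ ⊤ := by finiteness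
  obtain ⟨T, V, A, hT, hA⟩ := hsep.exists_isSeparatingLoop_of_le_qDelta hK hd (c := c) (s := s)
    (S := 2 * s) (R := W / B) hε.1 (by linarith [hε.2]) (by linarith)
    ((closedBall_subset_closedBall (by linarith [hε.2])).trans hcK)
    (ENNReal.div_ne_zero.2 ⟨hW₀, hB⟩) (ENNReal.div_ne_top hW hB₀)
    fun a p ha hp hp' => (hlow a p (by linarith) hp' (by
      linarith [hε.2, dist_triangle_left p c a])).le
  refine ⟨T, V, hT.mono ?_⟩
  rw [show 2 * (2 * s) = 4 * s by ring, ← ballWeight_two_sq] at hA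
  calc A ≤ CD ^ 3 * B * W := le_mul_mul_of_mul_div_le_mul_sq hW₀ hW hB₀ hB hA
    _ ≤ CD ^ 3 * B * (CD ^ 1 * ballWeight μ 2 c s) := by
      gcongr
      exact hd.ballWeight_le hs 1 (by simp)
    _ = 2 * CW * CD ^ 6 * ballWeight μ 2 c s := by ring

end OneScale

/-! ### Telescoping over dyadic scales -/

theorem le_div_of_mul_mul_mul_le_mul_sq {A B C W : ℝ≥0∞} (hW₀ : W ≠ 0) (hW : W ≠ ⊤) (hB₀ : B ≠ 0)
    (hB : B ≠ ⊤) (hC₀ : C ≠ 0) (hC : C ≠ ⊤) (h : A * (C * B * W) ≤ C * W ^ 2) : A ≤ W / B := by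
  rw [ENNReal.le_div_iff_mul_le (.inl hB₀) (.inl hB)]
  refine (ENNReal.mul_le_mul_iff_right (mul_ne_zero hC₀ hW₀) (ENNReal.mul_ne_top hC hW)).1 ?_
  calc C * W * (A * B) = A * (C * B * W) := by ring
    _ ≤ C * W ^ 2 := h
    _ = C * W * W := by ring

/-- The hypotheses under which the estimates of this section hold near a point: `K` is a compact
piece of the surface in which closed sets separating points from `b` have a separating component,
and `l` plays the role of `⌈log₂ λ⌉`. -/
structure PlanarSetting {X : Type*} [MetricSpace X] [MeasurableSpace X] (μ : Measure X)
    (CD CW : ℝ≥0) (lam : ℝ) (l : ℕ) (K : Set X) (b : X) : Prop where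
  isDoubling : IsDoublingWith μ CD
  isWMDM : IsWMDM μ 2 CW
  isLLC : IsLLC X lam
  one_le : 1 ≤ lam
  le_two_pow : lam ≤ 2 ^ l
  isCompact : IsCompact K
  hasPlanarSeparation : HasPlanarSeparation K b

/-- The cost, in units of `ballWeight μ 2 c s`, of a radial chain around `c` at scale `s`. -/
def radialConst (CD CW : ℝ≥0) (l : ℕ) : ℝ≥0∞ := 2 * CW * CD ^ (10 + 3 * l)

/-- Around `c` at scale `s` and resolution `ε`, the set `T` is a cheap separating loop, and there is
a cheap radial chain. -/
structure IsCheapScale {X : Type*} [MetricSpace X] [MeasurableSpace X] (μ : Measure X)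
    (CD CW : ℝ≥0) (lam : ℝ) (l : ℕ) (b c : X) (s ε : ℝ) (T : Set X) : Prop where
  exists_isSeparatingLoop :
    ∃ V, IsSeparatingLoop μ b c s (2 * s) ε (2 * CW * CD ^ 6 * ballWeight μ 2 c s) T V
  exists_isRadialPair :
    ∃ a e, IsRadialPair μ c lam s ε (radialConst CD CW l * ballWeight μ 2 c s) a e

theorem radial_scale_le {lam s : ℝ} {l : ℕ} (hlam : 1 ≤ lam) (hl : lam ≤ 2 ^ l) (hs : 0 < s) :
    8 * lam * s + 16 * lam * s ≤ 4 ^ (5 + 2 * l) * (s / (8 * lam) / lam / 2) := by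
  have : 0 < lam := one_pos.trans_le hlam
  have hpow : lam ^ 3 ≤ 4 ^ (2 * l) :=
    calc lam ^ 3 ≤ lam ^ 4 := pow_le_pow_right₀ hlam (by norm_num)
      _ ≤ (2 ^ l) ^ 4 := by gcongr
      _ = 4 ^ (2 * l) := by
        rw [show (4 : ℝ) = 2 ^ 2 by norm_num, ← pow_mul, ← pow_mul]
        ring_nf
  calc 8 * lam * s + 16 * lam * s = 384 * lam ^ 3 * (s / (8 * lam) / lam / 2) := by
        field_simp
        norm_num
    _ ≤ 4 ^ 5 * 4 ^ (2 * l) * (s / (8 * lam) / lam / 2) := by gcongr; norm_num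
    _ = 4 ^ (5 + 2 * l) * (s / (8 * lam) / lam / 2) := by rw [pow_add]

namespace PlanarSetting

variable {X : Type*} [MetricSpace X] [MeasurableSpace X] [BorelSpace X] [Nontrivial X]
  {μ : Measure X} {CD CW : ℝ≥0} {lam : ℝ} {l : ℕ} {K : Set X} {b : X}

-- If every radial chain were expensive, averaging would give a loop `T` of cost less than the weak
-- metric doubling property allows: `T` has two points at distance `s / (16 * lam ^ 2)`.
theorem exists_isRadialPair_of_lt_qDelta (H : PlanarSetting μ CD CW lam l K b) {c : X} {s ε : ℝ}
    (hs : 0 < s) (hcK : closedBall c (9 * lam * s) ⊆ K) (hb : 9 * lam * s ≤ dist c b)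
    (hε : 0 < ε) (hεs : ε ≤ s / (8 * lam) / lam / 2)
    (hlow : ∀ p q, dist p c ≤ 8 * lam * s → dist q c ≤ 8 * lam * s →
      s / (8 * lam) / lam / 2 ≤ dist p q →
      ballWeight μ 2 c (16 * lam * s) / (2 * (CW * CD ^ (5 + 2 * l))) < qDelta μ 2 (2 * ε) p q) :
    ∃ a e, IsRadialPair μ c lam s ε (radialConst CD CW l * ballWeight μ 2 c s) a e := by
  obtain ⟨hd, hw, hL, hlam, hl, hK, hsep⟩ := H
  have hls : s ≤ lam * s := le_mul_of_one_le_left hs.le hlam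
  have hσ : s / (8 * lam) ≤ s := div_le_self hs.le (by linarith)
  have hεσ : ε ≤ s / (8 * lam) :=
    hεs.trans ((half_le_self (by positivity)).trans (div_le_self (by positivity) hlam))
  set W := ballWeight μ 2 c (16 * lam * s)
  set B : ℝ≥0∞ := 2 * (CW * CD ^ (5 + 2 * l))
  have hW₀ : W ≠ 0 := (hd.ballWeight_pos c (by positivity)).ne'
  have hW : W ≠ ⊤ := hd.ballWeight_ne_top zero_le_two c (by positivity)
  have hB₀ : B ≠ 0 := hw.two_mul_mul_pow_ne_zero hd _
  have hC₀ : (CD : ℝ≥0∞) ^ 3 ≠ 0 := pow_ne_zero _ (one_pos.trans_le hd.one_le).ne'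
  have hBW : CD ^ 3 * B * W ≤ radialConst CD CW l * ballWeight μ 2 c s :=
    calc CD ^ 3 * B * W ≤ CD ^ 3 * B * (CD ^ (2 + l) * ballWeight μ 2 c s) := by
          gcongr
          exact hd.ballWeight_le_of_le_mul hl c hs le_rfl
      _ = radialConst CD CW l * ballWeight μ 2 c s := by rw [radialConst]; ring
  by_contra! hcon
  obtain ⟨T, V, A, hT, hA⟩ := hsep.exists_isSeparatingLoop_of_le_qDelta hK hd (c := c)
    (s := s / (8 * lam)) (S := 8 * lam * s) (R := CD ^ 3 * B * W) hε hεσ (by linarith)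
    ((closedBall_subset_closedBall (by linarith)).trans hcK) (by positivity) (by finiteness)
    fun a e ha he _ => not_lt.1 fun hlt => hcon a e ⟨ha, he, hlt.trans_le hBW⟩
  rw [show 2 * (8 * lam * s) = 16 * lam * s by ring, ← ballWeight_two_sq] at hA
  obtain ⟨p, hp, q, hq, hpq⟩ := hT.exists_le_dist hL (by positivity) hεs (by linarith)
  have hlt := (hlow p q (hT.annulus p hp).2 (hT.annulus q hq).2 hpq).trans_le
    (hT.qDelta_le p hp q hq)
  exact hlt.not_ge <|
    le_div_of_mul_mul_mul_le_mul_sq hW₀ hW hB₀ (by finiteness) hC₀ (by finiteness) hA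

theorem eventually_exists_isRadialPair (H : PlanarSetting μ CD CW lam l K b) {c : X} {s : ℝ}
    (hs : 0 < s) (hcK : closedBall c (9 * lam * s) ⊆ K) (hb : 9 * lam * s ≤ dist c b) :
    ∀ᶠ ε in 𝓝[>] (0 : ℝ), ∃ a e,
      IsRadialPair μ c lam s ε (radialConst CD CW l * ballWeight μ 2 c s) a e := by
  have := H.isLLC.preconnectedSpace
  have : 0 < lam := one_pos.trans_le H.one_le
  have hls : 0 < lam * s := by positivity
  have hcpt : IsCompact (closedBall c (8 * lam * s)) :=
    H.isCompact.of_isClosed_subset isClosed_closedBall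
      ((closedBall_subset_closedBall (by linarith)).trans hcK)
  filter_upwards [H.isWMDM.eventually_lt_qDelta H.isDoubling hcpt (by positivity) (by positivity)
    (5 + 2 * l) (radial_scale_le H.one_le H.le_two_pow hs),
    Ioo_mem_nhdsGT (by positivity : 0 < s / (8 * lam) / lam / 2)] with ε hlow hε
  exact H.exists_isRadialPair_of_lt_qDelta hs hcK hb hε.1 hε.2.le hlow

theorem eventually_exists_isCheapScale (H : PlanarSetting μ CD CW lam l K b) {c : X} {s : ℝ}
    (hs : 0 < s) (hcK : closedBall c (9 * lam * s) ⊆ K) (hb : 9 * lam * s ≤ dist c b) :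
    ∀ᶠ ε in 𝓝[>] (0 : ℝ), ∃ T, IsCheapScale μ CD CW lam l b c s ε T := by
  have := H.isLLC.preconnectedSpace
  have hls : s ≤ lam * s := le_mul_of_one_le_left hs.le H.one_le
  filter_upwards [H.eventually_exists_isRadialPair hs hcK hb,
    H.isWMDM.eventually_exists_isSeparatingLoop H.isDoubling H.hasPlanarSeparation H.isCompact hs
      ((closedBall_subset_closedBall (by linarith)).trans hcK)] with ε hr ⟨T, V, hT⟩
  exact ⟨T, ⟨V, hT⟩, hr⟩

end PlanarSetting

theorem exists_div_two_pow_lt {s r : ℝ} (hs : 0 < s) (hr : 0 < r) :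
    ∃ n : ℕ, s / 2 ^ n < r := by
  obtain ⟨n, hn⟩ := exists_pow_lt_of_lt_one (div_pos hr hs) (one_half_lt_one (α := ℝ))
  refine ⟨n, ?_⟩
  rw [lt_div_iff₀ hs] at hn
  simpa [div_eq_mul_inv, mul_comm] using hn

section Telescoping

variable {X : Type*} [MetricSpace X] [MeasurableSpace X] {μ : Measure X} {CD CW : ℝ≥0} {lam : ℝ}
  {l : ℕ} {K : Set X} {b : X}

-- The radial chain of the larger scale crosses both loops.
theorem IsCheapScale.qDelta_le {c₁ c₂ : X} {s₁ s₂ ε δ : ℝ} {T₁ T₂ : Set X}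
    (h₁ : IsCheapScale μ CD CW lam l b c₁ s₁ ε T₁) (h₂ : IsCheapScale μ CD CW lam l b c₂ s₂ ε T₂)
    (H : PlanarSetting μ CD CW lam l K b) (hs₂ : 0 < s₂) (hs : s₂ / 2 ≤ s₁) (hs' : s₁ ≤ s₂)
    (hc : dist c₂ c₁ ≤ s₂ / (8 * lam)) (hb₁ : 6 * lam * s₂ ≤ dist b c₁)
    (hb₂ : 6 * lam * s₂ ≤ dist b c₂) (hε : 0 < ε) (hεs : ε ≤ s₂ / 8) (hεδ : 4 * lam * ε ≤ δ)
    {W : ℝ≥0∞} (hW₁ : ballWeight μ 2 c₁ s₁ ≤ W) (hW₂ : ballWeight μ 2 c₂ s₂ ≤ W) {p₁ p₂ : X}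
    (hp₁ : p₁ ∈ T₁) (hp₂ : p₂ ∈ T₂) : qDelta μ 2 δ p₁ p₂ ≤ radialConst CD CW l * (5 * W) := by
  obtain ⟨hd, -, hL, hlam, hl, -, -⟩ := H
  have : Nonempty X := ⟨b⟩
  have : 0 < lam := one_pos.trans_le hlam
  obtain ⟨V₁, hT₁⟩ := h₁.exists_isSeparatingLoop
  obtain ⟨V₂, hT₂⟩ := h₂.exists_isSeparatingLoop
  obtain ⟨a, e, hr⟩ := h₂.exists_isRadialPair
  have hloop : ∀ {w : ℝ≥0∞}, w ≤ W →
      CD ^ (2 + l) * (2 * CW * CD ^ 6 * w) ≤ radialConst CD CW l * W := fun {w} hw =>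
    calc CD ^ (2 + l) * (2 * CW * CD ^ 6 * w) = 2 * CW * CD ^ (8 + l) * w := by ring
      _ ≤ 2 * CW * CD ^ (10 + 3 * l) * W := by
        gcongr
        exacts [hd.one_le, by norm_num, by lia]
  refine (hT₁.qDelta_le_of_isChainBarrier hT₂
    (hT₁.isChainBarrier_of_isRadialPair hr hL hlam hε hs₂ hεs hs hs' hc hb₁)
    (hT₂.isChainBarrier_of_isRadialPair hr hL hlam hε hs₂ hεs (half_le_self hs₂.le) le_rfl
      (by rw [dist_self]; positivity) hb₂)
    hr.qDelta_lt hd hlam hl hε hεδ hp₁ hp₂).trans ?_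
  calc _ ≤ 2 * (radialConst CD CW l * W) +
        (radialConst CD CW l * W + 2 * (radialConst CD CW l * W)) := by
        gcongr 2 * ?_ + (?_ + 2 * ?_)
        exacts [hloop hW₁, mul_le_mul_right hW₂ _, hloop hW₂]
    _ = radialConst CD CW l * (5 * W) := by ring

namespace PlanarSetting

theorem exists_qDelta_le_sum_ballWeight (H : PlanarSetting μ CD CW lam l K b) {c : X}
    {s ε δ : ℝ} (hs : 0 < s) (hb : 6 * lam * s ≤ dist b c) (hε : 0 < ε) (hεδ : 4 * lam * ε ≤ δ)
    {n : ℕ} (hεs : ε ≤ s / 2 ^ n / 8)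
    (hT : ∀ k ≤ n, ∃ T, IsCheapScale μ CD CW lam l b c (s / 2 ^ k) ε T) :
    ∃ T, IsCheapScale μ CD CW lam l b c s ε T ∧ ∃ p ∈ T,
      ∃ T', IsCheapScale μ CD CW lam l b c (s / 2 ^ n) ε T' ∧ ∃ q ∈ T',
        qDelta μ 2 δ q p ≤
          radialConst CD CW l * (5 * ∑ k ∈ Finset.range n, ballWeight μ 2 c (s / 2 ^ k)) := by
  have : 0 < lam := one_pos.trans_le H.one_le
  induction n with
  | zero =>
    obtain ⟨T, h⟩ := hT 0 le_rfl
    obtain ⟨V, hV⟩ := h.exists_isSeparatingLoop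
    obtain ⟨p, hp⟩ := hV.nonempty
    refine ⟨T, by simpa using h, p, hp, T, h, p, hp, ?_⟩
    rw [qDelta_self]
    exact zero_le
  | succ n ih =>
    have hhalf : s / 2 ^ (n + 1) = s / 2 ^ n / 2 := by rw [pow_succ, div_div]
    have hsn : 0 < s / 2 ^ n := by positivity
    have hbn : 6 * lam * (s / 2 ^ n) ≤ dist b c :=
      le_trans (by gcongr; exact div_le_self hs.le (one_le_pow₀ one_le_two)) hb
    obtain ⟨T, h, p, hp, T', h', q', hq', hle⟩ :=
      ih (by linarith) fun k hk => hT k (hk.trans n.le_succ)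
    obtain ⟨T'', h''⟩ := hT (n + 1) le_rfl
    obtain ⟨V, hV⟩ := h''.exists_isSeparatingLoop
    obtain ⟨q, hq⟩ := hV.nonempty
    refine ⟨T, h, p, hp, T'', h'', q, hq, ?_⟩
    have hstep : qDelta μ 2 δ q q' ≤
        radialConst CD CW l * (5 * ballWeight μ 2 c (s / 2 ^ n)) :=
      h''.qDelta_le h' H hsn hhalf.ge (by linarith) (by rw [dist_self]; positivity) hbn hbn hε
        (by linarith) hεδ (ballWeight_mono zero_le_two (by rw [dist_self]; linarith)) le_rfl hq hq'
    refine (qDelta_triangle μ 2 δ q q' p).trans ((add_le_add hstep hle).trans_eq ?_)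
    rw [Finset.sum_range_succ]
    ring

variable [BorelSpace X] [Nontrivial X]

theorem eventually_exists_qDelta_le (H : PlanarSetting μ CD CW lam l K b) {c : X} {s δ : ℝ}
    (hs : 0 < s) (hcK : closedBall c (9 * lam * s) ⊆ K) (hb : 9 * lam * s ≤ dist c b)
    (hδ : 0 < δ) {η : ℝ≥0∞} (hη : 0 < η) :
    ∀ᶠ ε in 𝓝[>] (0 : ℝ), ∃ T, IsCheapScale μ CD CW lam l b c s ε T ∧ ∃ p ∈ T,
      qDelta μ 2 δ c p ≤ radialConst CD CW l * (5 * (2 * CD ^ 3 * ballWeight μ 2 c s)) + η := by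
  have := H.isLLC.preconnectedSpace
  have hlam := H.one_le
  have : 0 < lam := one_pos.trans_le hlam
  have hls : s ≤ lam * s := le_mul_of_one_le_left hs.le hlam
  obtain ⟨r, hηr, hr⟩ := ((ENNReal.tendsto_nhds_zero.1 (H.isDoubling.tendsto_ballWeight c) η
    hη).and self_mem_nhdsWithin).exists
  obtain ⟨n, hn⟩ := exists_div_two_pow_lt hs (div_pos (lt_min hr hδ) four_pos)
  have hscale : ∀ k : ℕ, 9 * lam * (s / 2 ^ k) ≤ 9 * lam * s := fun k => by
    gcongr
    exact div_le_self hs.le (one_le_pow₀ one_le_two)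
  filter_upwards [(Finset.eventually_all (Finset.range (n + 1))).2 fun k _ =>
      H.eventually_exists_isCheapScale (by positivity : 0 < s / 2 ^ k)
        ((closedBall_subset_closedBall (hscale k)).trans hcK) ((hscale k).trans hb),
    Ioo_mem_nhdsGT (by positivity : 0 < s / 2 ^ n / 8),
    Ioo_mem_nhdsGT (by positivity : 0 < δ / (4 * lam))] with ε hT hεs hεδ
  obtain ⟨T, h, p, hp, T', h', q, hq, hqp⟩ := H.exists_qDelta_le_sum_ballWeight hs
    (by linarith [dist_comm b c]) hεs.1 ((le_div_iff₀' (by positivity)).1 hεδ.2.le) hεs.2.le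
    fun k hk => hT k (Finset.mem_range_succ_iff.2 hk)
  have hcq : qDelta μ 2 δ c q ≤ η := by
    obtain ⟨V, hV⟩ := h'.exists_isSeparatingLoop
    have hdist := (hV.annulus q hq).2
    have := min_le_left r δ
    have := min_le_right r δ
    rw [qDelta_comm]
    exact (qDelta_le_pairWeight μ 2 (by linarith)).trans <|
      (pairWeight_le_ballWeight zero_le_two (by linarith)).trans hηr
  have hsum := le_self_add.trans (H.isDoubling.sum_ballWeight_add_le hs (p := b) (by linarith) n)
  refine ⟨T, h, p, hp, (qDelta_triangle μ 2 δ c q p).trans ?_⟩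
  rw [add_comm]
  exact add_le_add (hqp.trans (by gcongr)) hcq

end PlanarSetting

end Telescoping

section Main

variable {X : Type*} [MetricSpace X] [MeasurableSpace X] [BorelSpace X] {μ : Measure X}
  {CD CW : ℝ≥0} {lam : ℝ} {l : ℕ}

theorem IsDoublingWith.radialConst_mul_le [PreconnectedSpace X] [Nontrivial X]
    (hd : IsDoublingWith μ CD) (W : ℝ≥0∞) :
    radialConst CD CW l * (CD ^ (2 + l) * W) * (20 * CD ^ 3 + 7) ≤
      16 * CW * CD ^ (21 + 4 * l) * W := by
  have hC : (2 : ℝ≥0∞) ≤ CD ^ 3 := hd.two_le_pow_three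
  have hC' : (7 : ℝ≥0∞) ≤ 12 * CD ^ 3 :=
    le_trans (by norm_num) (mul_le_mul_right hC (12 : ℝ≥0∞))
  calc radialConst CD CW l * (CD ^ (2 + l) * W) * (20 * CD ^ 3 + 7)
      ≤ radialConst CD CW l * (CD ^ (2 + l) * W) * (20 * CD ^ 3 + 12 * CD ^ 3) := by gcongr
    _ = 16 * CW * (2 * 2 * CD ^ (15 + 4 * l)) * W := by rw [radialConst]; ring
    _ ≤ 16 * CW * (CD ^ 3 * CD ^ 3 * CD ^ (15 + 4 * l)) * W := by gcongr
    _ = 16 * CW * CD ^ (21 + 4 * l) * W := by ring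

namespace PlanarSetting

variable {K : Set X} {b : X}

theorem qDelta_le (H : PlanarSetting μ CD CW lam l K b) {x y : X} {s δ : ℝ} (hxy : x ≠ y)
    (hs : s = 8 * lam * dist x y) (hxK : closedBall x (9 * lam * s) ⊆ K)
    (hyK : closedBall y (9 * lam * s) ⊆ K) (hxb : 9 * lam * s ≤ dist x b)
    (hyb : 9 * lam * s ≤ dist y b) (hδ : 0 < δ) {W : ℝ≥0∞} (hxW : ballWeight μ 2 x s ≤ W)
    (hyW : ballWeight μ 2 y s ≤ W) :
    qDelta μ 2 δ x y ≤ radialConst CD CW l * W * (20 * CD ^ 3 + 7) := by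
  have hlam : 0 < lam := one_pos.trans_le H.one_le
  have hdist : 0 < dist x y := dist_pos.2 hxy
  have hs₀ : 0 < s := by rw [hs]; positivity
  have : 0 < lam * s := by positivity
  have : Nontrivial X := ⟨x, y, hxy⟩
  have hη : 0 < radialConst CD CW l * W := by
    have hCW := H.isWMDM.ne_zero H.isDoubling
    have hCD : (CD : ℝ≥0∞) ≠ 0 := (one_pos.trans_le H.isDoubling.one_le).ne'
    have hW : 0 < W := (H.isDoubling.ballWeight_pos x hs₀).trans_le hxW
    rw [radialConst]
    positivity
  obtain ⟨ε, ⟨⟨Tx, hTx, p, hp, hxp⟩, Ty, hTy, q, hq, hyq⟩, hεs, hεδ⟩ :=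
    (((H.eventually_exists_qDelta_le hs₀ hxK hxb hδ hη).and
      (H.eventually_exists_qDelta_le hs₀ hyK hyb hδ hη)).and
        ((eventually_mem_set.2 (Ioo_mem_nhdsGT (by positivity : 0 < s / 8))).and
          (Ioo_mem_nhdsGT (by positivity : 0 < δ / (4 * lam))))).exists
  have hpq : qDelta μ 2 δ p q ≤ radialConst CD CW l * (5 * W) :=
    hTx.qDelta_le hTy H hs₀ (half_le_self hs₀.le) le_rfl
      (by rw [hs, mul_div_cancel_left₀ _ (by positivity), dist_comm])
      (by linarith [dist_comm x b]) (by linarith [dist_comm y b]) hεs.1 hεs.2.le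
      ((le_div_iff₀' (by positivity)).1 hεδ.2.le) hxW hyW hp hq
  rw [qDelta_comm] at hyq
  calc qDelta μ 2 δ x y ≤ qDelta μ 2 δ x p + (qDelta μ 2 δ p q + qDelta μ 2 δ q y) :=
        (qDelta_triangle μ 2 δ x p y).trans (add_le_add_right (qDelta_triangle μ 2 δ p q y) _)
    _ ≤ (radialConst CD CW l * (5 * (2 * CD ^ 3 * W)) + radialConst CD CW l * W) +
        (radialConst CD CW l * (5 * W) +
          (radialConst CD CW l * (5 * (2 * CD ^ 3 * W)) + radialConst CD CW l * W)) := by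
        gcongr
        exacts [hxp.trans (by gcongr), hyq.trans (by gcongr)]
    _ = radialConst CD CW l * W * (20 * CD ^ 3 + 7) := by ring

theorem qmu_le_pairWeight (H : PlanarSetting μ CD CW lam l K b) {x y : X} (hxy : x ≠ y)
    (hxK : closedBall x (72 * lam ^ 2 * dist x y) ⊆ K)
    (hyK : closedBall y (72 * lam ^ 2 * dist x y) ⊆ K)
    (hxb : 72 * lam ^ 2 * dist x y ≤ dist x b) (hyb : 72 * lam ^ 2 * dist x y ≤ dist y b) :
    qmu μ 2 x y ≤ 16 * CW * CD ^ (21 + 4 * l) * pairWeight μ 2 x y := by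
  have := H.isLLC.preconnectedSpace
  have : Nontrivial X := ⟨x, y, hxy⟩
  have hscale : 72 * lam ^ 2 * dist x y = 9 * lam * (8 * lam * dist x y) := by ring
  rw [hscale] at hxK hyK hxb hyb
  have hdist : 0 < dist x y := dist_pos.2 hxy
  have hlam : dist x y ≤ lam * dist x y := le_mul_of_one_le_left hdist.le H.one_le
  have hweight : ∀ {z w : X}, dist z w = dist x y →
      ballWeight μ 2 z (8 * lam * dist x y) ≤ CD ^ (2 + l) * pairWeight μ 2 z w := fun {z w} hzw =>
    (H.isDoubling.ballWeight_le_of_le_mul H.le_two_pow z hdist (by linarith)).trans <| by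
      gcongr
      exact ballWeight_le_pairWeight zero_le_two hzw.ge
  refine (qmu_le_of_forall_qDelta_le fun δ hδ => ?_).trans
    (H.isDoubling.radialConst_mul_le (CW := CW) (pairWeight μ 2 x y))
  refine H.qDelta_le hxy rfl hxK hyK hxb hyb hδ (hweight rfl) ?_
  rw [pairWeight_comm]
  exact hweight (dist_comm y x)

end PlanarSetting

theorem le_two_pow_ellOf (h : 1 ≤ lam) : lam ≤ 2 ^ ellOf lam := by
  rw [← Real.rpow_natCast, ← Real.logb_le_iff_le_rpow one_lt_two (one_pos.trans_le h)]
  exact (Int.le_ceil _).trans (mod_cast Int.self_le_toNat _)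

theorem statement2_general (hlam : 1 ≤ lam) (hl : lam ≤ 2 ^ l) (hL : IsLLC X lam)
    (hd : IsDoublingWith μ CD) (hw : IsWMDM μ 2 CW) {x : X} (ψ : OpenPartialHomeomorph X ℂ)
    (hx : x ∈ ψ.source) :
    ∃ rx > 0, ∀ y ∈ Metric.ball x rx,
      qmu μ 2 x y ≤ 16 * CW * CD ^ (21 + 4 * l) * μ (pairBall x y) ^ (1 / 2 : ℝ) := by
  obtain ⟨ρ, hρ, b, hK, hb, hsep⟩ := exists_hasPlanarSeparation_closedBall ψ hx
  refine ⟨ρ / (100 * lam ^ 2), by positivity, fun y hy => ?_⟩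
  rcases eq_or_ne x y with rfl | hxy
  · exact (qmu_le_of_forall_qDelta_le fun δ _ => (qDelta_self μ 2 δ x).le).trans zero_le
  rw [mem_ball', lt_div_iff₀ (by positivity)] at hy
  have hdist : 0 < dist x y := dist_pos.2 hxy
  have hlam₂ : dist x y ≤ lam ^ 2 * dist x y :=
    le_mul_of_one_le_left hdist.le (one_le_pow₀ hlam)
  exact PlanarSetting.qmu_le_pairWeight ⟨hd, hw, hL, hlam, hl, hK, hsep⟩ hxy
    (closedBall_subset_closedBall (by linarith))
    (closedBall_subset_closedBall' (by linarith [dist_comm x y])) (by linarith)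
    (by linarith [dist_triangle x y b])

end Main

theorem statement2
    {X : Type*} [MetricSpace X] [MeasurableSpace X] [BorelSpace X]
    (lam : ℝ) (CD CW : ℝ≥0) (M : ℕ) (μ : Measure X)
    (hlam : 1 ≤ lam) (hLLC : IsLLC X lam)
    (hhom : ∃ Ω₀ : Set ↥Sphere2, IsCircleDomainS2 Ω₀ ∧ Nonempty (X ≃ₜ ↥Ω₀))
    (hcpt : CompactSpace (Completion X))
    (hfin : (residComps X).Finite) (hM : (residComps X).ncard = M)
    (hreg : μ.Regular) (hdbl : IsDoublingWith μ CD) (hw : IsWMDM μ 2 CW) :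
    ∀ x : X, ∃ rx : ℝ, 0 < rx ∧ ∀ y ∈ Metric.ball x rx,
      qmu μ 2 x y ≤ CSconst lam CD CW * μ (pairBall x y) ^ (1 / 2 : ℝ) := by
  intro x
  obtain ⟨Ω, ⟨hΩ, -, -⟩, ⟨f⟩⟩ := hhom
  obtain ⟨ψ, hx⟩ := exists_openPartialHomeomorph_complex_of_homeomorph_sphere hΩ f x
  obtain ⟨rx, hrx, hq⟩ := statement2_general hlam (le_two_pow_ellOf hlam) hLLC hdbl hw ψ hx
  have : Nonempty X := ⟨x⟩
  refine ⟨rx, hrx, fun y hy => (hq y hy).trans ?_⟩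
  rw [CSconst]
  gcongr
  exacts [hdbl.one_le, by norm_num, by norm_num]

end
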